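/- arXiv:1509.05246 — 3 statements merged into one kernel-verified Lean document; each statement's English description precedes it below -/
import Mathlib

section
/- Let (X,Σ,μ,T) be an ergodic measure-preserving ℤ^d-system. Then (X,μ,T) is weakly mixing if and only if every f ∈ L²(X,μ) that is not μ-a.e. constant is μ-mean sensitive. -/
open MeasureTheory Filter Finset Metric
open scoped Classical

noncomputable section

/-- The box `{0,…,n−1}^d` inside `ℤ^d`. -/
def Fbox (d n : ℕ) : Finset (Fin d → ℤ) :=
  Fintype.piFinset fun _ => Finset.Icc (0 : ℤ) ((n : ℤ) - 1)

/-- Upper density of a subset of `ℤ^d` along the boxes `F_n`. -/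
def upperDensity (d : ℕ) (S : Set (Fin d → ℤ)) : ℝ :=
  Filter.limsup
    (fun n : ℕ => (((Fbox d n).filter (fun j => j ∈ S)).card : ℝ) / ((Fbox d n).card : ℝ))
    Filter.atTop

/-- Lower density of a subset of `ℤ^d` along the boxes `F_n`. -/
def lowerDensity (d : ℕ) (S : Set (Fin d → ℤ)) : ℝ :=
  Filter.liminf
    (fun n : ℕ => (((Fbox d n).filter (fun j => j ∈ S)).card : ℝ) / ((Fbox d n).card : ℝ))
    Filter.atTop

variable {X : Type*}

/-- The pseudometric `d_f(x,y) = limsup_n ((1/|F_n|) Σ_{j∈F_n} |f(T^j x) − f(T^j y)|²)^{1/2}`. -/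
def dF {d : ℕ} (T : (Fin d → ℤ) → X → X) (f : X → ℂ) (x y : X) : ℝ :=
  Filter.limsup (fun n : ℕ =>
    Real.sqrt ((∑ j ∈ Fbox d n, ‖f (T j x) - f (T j y)‖ ^ 2) / ((Fbox d n).card : ℝ)))
    Filter.atTop

/-- `x` is a generic point for `|f|²`:
the Birkhoff averages of `|f|²` along `x` converge to `∫ |f|² dμ`. -/
def genericSq {d : ℕ} [MeasurableSpace X] (μ : Measure X) (T : (Fin d → ℤ) → X → X)
    (f : X → ℂ) (x : X) : Prop :=
  Filter.Tendsto
    (fun n : ℕ => (∑ j ∈ Fbox d n, ‖f (T j x)‖ ^ 2) / ((Fbox d n).card : ℝ))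
    Filter.atTop (nhds (∫ y, ‖f y‖ ^ 2 ∂μ))

/-- `ε` is a `μ`-sensitivity constant for `f`: every positive measure set contains two
generic points `x, y` with `d_f(x,y) > ε`. -/
def SensitivityConstant {d : ℕ} [MeasurableSpace X] (μ : Measure X)
    (T : (Fin d → ℤ) → X → X) (f : X → ℂ) (ε : ℝ) : Prop :=
  0 < ε ∧ ∀ A : Set X, MeasurableSet A → 0 < μ A →
    ∃ x ∈ A, ∃ y ∈ A, genericSq μ T f x ∧ genericSq μ T f y ∧ ε < dF T f x y

/-- `f` is `μ`-mean sensitive (`f ∈ H_ms`). -/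
def MeanSensitiveFun {d : ℕ} [MeasurableSpace X] (μ : Measure X)
    (T : (Fin d → ℤ) → X → X) (f : X → ℂ) : Prop :=
  ∃ ε : ℝ, SensitivityConstant μ T f ε

/-!
If `T × T` is ergodic, the pointwise ergodic theorem applied to `(x, y) ↦ ‖f x - f y‖²` on `X × X`
shows that `dF T f` is almost surely the constant `(∫∫ ‖f x - f y‖²)^{1/2}`, which vanishes only
for `f` almost everywhere constant; half of it is a sensitivity constant, because `A × A` has
positive measure whenever `A` does.

Conversely, let `A ⊆ X × X` be invariant under `T × T`, with sections `A_x`. Almost all sections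
lie in a separable subspace of the measure algebra, so there are sets of positive measure on which
they are uniformly close. Since `T^j` carries `A_x` to `A_{T^j x}` without changing distances,
`x ↦ μ (A_x ∩ C)` is not mean sensitive, hence is constant for every `C`. The same holds with the
coordinates exchanged, so `A` is independent of all rectangles and therefore of itself.

The pointwise ergodic theorem for `ℤ^d` comes from a maximal inequality, which makes its validity
an `L¹`-closed condition: cover an orbit segment by boxes à la Vitali and integrate over `X`. The
theorem holds for constants trivially and for bounded coboundaries by a boundary estimate, and an
`L²` function orthogonal to all coboundaries is invariant, hence constant.
-/

open Function MeasurableSpace ProbabilityTheory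
open scoped ENNReal Topology symmDiff

section Boxes

variable {d : ℕ}

/-- The translate `j + F_n` of the box `F_n`, that is, the cube of side `n` with lowest corner
`j`. -/
def boxAt (j : Fin d → ℤ) (n : ℕ) : Finset (Fin d → ℤ) :=
  Fintype.piFinset fun k => Ico (j k) (j k + n)

theorem mem_boxAt {i j : Fin d → ℤ} {n : ℕ} : i ∈ boxAt j n ↔ ∀ k, j k ≤ i k ∧ i k < j k + n := by
  simp only [boxAt, Fintype.mem_piFinset, mem_Ico]

theorem boxAt_zero (n : ℕ) : boxAt (0 : Fin d → ℤ) n = Fbox d n := by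
  ext i
  simp only [mem_boxAt, Fbox, Fintype.mem_piFinset, mem_Icc, Pi.zero_apply]
  exact forall_congr' fun k => by omega

theorem card_boxAt (j : Fin d → ℤ) (n : ℕ) : #(boxAt j n) = n ^ d := by
  simp [boxAt]

theorem card_Fbox (d n : ℕ) : #(Fbox d n) = n ^ d := by
  rw [← boxAt_zero, card_boxAt]

theorem sum_boxAt {M : Type*} [AddCommMonoid M] (F : (Fin d → ℤ) → M) (j : Fin d → ℤ) (n : ℕ) :
    ∑ i ∈ boxAt j n, F i = ∑ i ∈ Fbox d n, F (i + j) := by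
  rw [← boxAt_zero]
  refine (sum_equiv (Equiv.addRight j) (fun i => ?_) fun _ _ => rfl).symm
  simp only [mem_boxAt, Equiv.coe_addRight, Pi.add_apply, Pi.zero_apply]
  exact forall_congr' fun k => by omega

theorem card_Fbox_inter_boxAt (j : Fin d → ℤ) (n : ℕ) :
    #(Fbox d n ∩ boxAt j n) = ∏ k, (n - (j k).natAbs) := by
  have inter_eq : Fbox d n ∩ boxAt j n =
      Fintype.piFinset fun k => Ico (max 0 (j k)) (min (n : ℤ) (j k + n)) := by
    ext i
    simp only [← boxAt_zero, mem_inter, mem_boxAt, Fintype.mem_piFinset, mem_Ico, ← forall_and,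
      Pi.zero_apply]
    exact forall_congr' fun k => by omega
  rw [inter_eq, Fintype.card_piFinset]
  exact prod_congr rfl fun k _ => by rw [Int.card_Ico]; omega

theorem tendsto_card_Fbox_inter_boxAt_div (j : Fin d → ℤ) :
    Tendsto (fun n : ℕ => (#(Fbox d n ∩ boxAt j n) : ℝ) / #(Fbox d n)) atTop (𝓝 1) := by
  have factor (m : ℕ) : Tendsto (fun n : ℕ => ((n - m : ℕ) : ℝ) / n) atTop (𝓝 1) := by
    have h : Tendsto (fun n : ℕ => 1 - (m : ℝ) / n) atTop (𝓝 (1 - 0)) :=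
      (tendsto_const_div_atTop_nhds_zero_nat _).const_sub 1
    rw [sub_zero] at h
    refine h.congr' ?_
    filter_upwards [eventually_ge_atTop m, eventually_ne_atTop 0] with n hmn hn
    rw [Nat.cast_sub hmn, sub_div, div_self (Nat.cast_ne_zero.2 hn)]
  have h := tendsto_finsetProd univ fun k _ => factor (j k).natAbs
  simpa [card_Fbox_inter_boxAt, card_Fbox, prod_div_distrib] using h

theorem norm_sum_sub_sum_le {ι E : Type*} [SeminormedAddCommGroup E] [DecidableEq ι] {F : ι → E}
    {M : ℝ} (hF : ∀ i, ‖F i‖ ≤ M) (s t : Finset ι) :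
    ‖∑ i ∈ s, F i - ∑ i ∈ t, F i‖ ≤ M * #(s \ t) + M * #(t \ s) := by
  have norm_sum_le_mul (u : Finset ι) : ‖∑ i ∈ u, F i‖ ≤ M * #u := by
    simpa [mul_comm] using norm_sum_le_of_le u fun i _ => hF i
  rw [← sum_sdiff_sub_sum_sdiff]
  exact (norm_sub_le _ _).trans (add_le_add (norm_sum_le_mul _) (norm_sum_le_mul _))

theorem tendsto_inv_card_smul_sum_Fbox_shift_sub {E : Type*} [NormedAddCommGroup E]
    [NormedSpace ℝ E] {F : (Fin d → ℤ) → E} {M : ℝ} (hF : ∀ i, ‖F i‖ ≤ M) (j : Fin d → ℤ) :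
    Tendsto (fun n => (#(Fbox d n) : ℝ)⁻¹ • ∑ i ∈ Fbox d n, (F (i + j) - F i)) atTop (𝓝 0) := by
  have bound : Tendsto (fun n => 2 * M * (1 - (#(Fbox d n ∩ boxAt j n) : ℝ) / #(Fbox d n)))
      atTop (𝓝 0) := by
    simpa using ((tendsto_card_Fbox_inter_boxAt_div j).const_sub 1).const_mul (2 * M)
  refine squeeze_zero_norm' ?_ bound
  filter_upwards [eventually_ne_atTop 0] with n hn
  have card_ne : (#(Fbox d n) : ℝ) ≠ 0 := by rw [card_Fbox]; positivity
  have card_left : (#(Fbox d n \ boxAt j n) : ℝ) = #(Fbox d n) - #(Fbox d n ∩ boxAt j n) := by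
    rw [eq_sub_iff_add_eq]
    exact_mod_cast card_sdiff_add_card_inter _ _
  have card_right : (#(boxAt j n \ Fbox d n) : ℝ) = #(Fbox d n) - #(Fbox d n ∩ boxAt j n) := by
    rw [eq_sub_iff_add_eq, inter_comm, card_Fbox, ← card_boxAt j n]
    exact_mod_cast card_sdiff_add_card_inter _ _
  rw [sum_sub_distrib, ← sum_boxAt, norm_smul, norm_inv, RCLike.norm_natCast]
  calc (#(Fbox d n) : ℝ)⁻¹ * ‖∑ i ∈ boxAt j n, F i - ∑ i ∈ Fbox d n, F i‖
      ≤ (#(Fbox d n) : ℝ)⁻¹ * (M * #(boxAt j n \ Fbox d n) + M * #(Fbox d n \ boxAt j n)) := by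
        gcongr
        exact norm_sum_sub_sum_le hF _ _
    _ = 2 * M * (1 - (#(Fbox d n ∩ boxAt j n) : ℝ) / #(Fbox d n)) := by
        rw [card_left, card_right]
        field_simp
        ring

theorem exists_pairwiseDisjoint_boxAt_card_le (S : Finset (Fin d → ℤ)) (r : (Fin d → ℤ) → ℕ)
    (hr : ∀ j ∈ S, (boxAt j (r j)).Nonempty) :
    ∃ D ⊆ S, (D : Set (Fin d → ℤ)).PairwiseDisjoint (fun j => boxAt j (r j)) ∧
      #S ≤ 3 ^ d * ∑ j ∈ D, #(boxAt j (r j)) := by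
  obtain ⟨u, huS, hdisj, hcov⟩ := Vitali.exists_disjoint_subfamily_covering_enlargement
    (fun j => (boxAt j (r j) : Set (Fin d → ℤ))) S (fun j => (r j : ℝ)) 2 one_lt_two
    (fun _ _ => Nat.cast_nonneg _) (S.sup r : ℕ) (fun j hj => Nat.cast_le.2 (le_sup hj))
    (fun j hj => coe_nonempty.2 (hr j hj))
  lift u to Finset (Fin d → ℤ) using S.finite_toSet.subset huS
  have subset_enlarged : S ⊆ u.biUnion fun b => boxAt (fun k => b k - 2 * r b) (3 * r b) := by
    intro j hj
    obtain ⟨b, hb, ⟨i, hij, hib⟩, hle⟩ := hcov j hj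
    have hle' : r j ≤ 2 * r b := mod_cast hle
    refine mem_biUnion.2 ⟨b, hb, mem_boxAt.2 fun k => ?_⟩
    have hij' := mem_boxAt.1 (mem_coe.1 hij) k
    have hib' := mem_boxAt.1 (mem_coe.1 hib) k
    constructor <;> push_cast <;> omega
  refine ⟨u, coe_subset.1 huS, fun a ha b hb hab => disjoint_coe.1 (hdisj ha hb hab), ?_⟩
  calc #S ≤ ∑ b ∈ u, #(boxAt (fun k => b k - 2 * r b) (3 * r b)) :=
        (card_le_card subset_enlarged).trans card_biUnion_le
    _ = 3 ^ d * ∑ j ∈ u, #(boxAt j (r j)) := by simp only [card_boxAt, mul_pow, mul_sum]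

theorem mul_card_le_sum_biUnion_boxAt (S : Finset (Fin d → ℤ)) (r : (Fin d → ℤ) → ℕ)
    (hr : ∀ j ∈ S, (boxAt j (r j)).Nonempty) {F : (Fin d → ℤ) → ℝ≥0∞} {t : ℝ≥0∞}
    (hF : ∀ j ∈ S, t * #(boxAt j (r j)) ≤ ∑ i ∈ boxAt j (r j), F i) :
    t * #S ≤ 3 ^ d * ∑ i ∈ S.biUnion fun j => boxAt j (r j), F i := by
  obtain ⟨D, hDS, hdisj, hcard⟩ := exists_pairwiseDisjoint_boxAt_card_le S r hr
  calc t * #S ≤ t * (3 ^ d * ∑ j ∈ D, #(boxAt j (r j)) : ℕ) := by gcongr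
    _ = 3 ^ d * ∑ j ∈ D, t * #(boxAt j (r j)) := by
        push_cast
        rw [← mul_sum]
        ring
    _ ≤ 3 ^ d * ∑ j ∈ D, ∑ i ∈ boxAt j (r j), F i := by
        gcongr with j hj
        exact hF j (hDS hj)
    _ = 3 ^ d * ∑ i ∈ D.biUnion fun j => boxAt j (r j), F i := by rw [sum_biUnion hdisj]
    _ ≤ 3 ^ d * ∑ i ∈ S.biUnion fun j => boxAt j (r j), F i := by
        gcongr

end Boxes

section Actions

variable {G : Type*} [MeasurableSpace X] {μ : Measure X} {T : G → X → X}

/-- An action `T` of the additive semigroup `G` on `(X, μ)` by measure-preserving maps. Since `G`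
need not have a zero, `T 0 = id` is not part of the definition. -/
structure IsMeasurePreservingAction [Add G] (T : G → X → X) (μ : Measure X) : Prop where
  measurePreserving (g : G) : MeasurePreserving (T g) μ μ
  map_add (g h : G) : T (g + h) = T g ∘ T h

/-- An ergodic action on a probability space: strictly invariant measurable sets obey a zero-one
law. -/
structure IsErgodicAction [Add G] (T : G → X → X) (μ : Measure X) : Prop
    extends IsMeasurePreservingAction T μ where
  measure_eq_zero_or_one (A : Set X) (hA : MeasurableSet A) (hinv : ∀ g, T g ⁻¹' A = A) :
    μ A = 0 ∨ μ A = 1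

/-- The diagonal action `T × T` on `X × X`, whose ergodicity is weak mixing of `T`. -/
def diagonalAction (T : G → X → X) (g : G) : X × X → X × X :=
  Prod.map (T g) (T g)

theorem IsMeasurePreservingAction.diagonal [Add G] [SFinite μ]
    (hT : IsMeasurePreservingAction T μ) :
    IsMeasurePreservingAction (diagonalAction T) (μ.prod μ) where
  measurePreserving g := (hT.measurePreserving g).prod (hT.measurePreserving g)
  map_add g h := by simp only [diagonalAction, hT.map_add, Prod.map_comp_map]

theorem IsMeasurePreservingAction.lintegral_sum_comp [Add G] (hT : IsMeasurePreservingAction T μ)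
    {F : X → ℝ≥0∞} (hF : Measurable F) (s : Finset G) :
    ∫⁻ x, ∑ g ∈ s, F (T g x) ∂μ = #s * ∫⁻ x, F x ∂μ := by
  have measurable_comp (g : G) : Measurable fun x => F (T g x) :=
    hF.comp (hT.measurePreserving g).measurable
  rw [lintegral_finsetSum _ fun g _ => measurable_comp g]
  simp only [(hT.measurePreserving _).lintegral_comp hF, sum_const, nsmul_eq_mul]

theorem IsMeasurePreservingAction.lintegral_card_visits [Add G]
    (hT : IsMeasurePreservingAction T μ) {A : Set X} (hA : MeasurableSet A) (s : Finset G) :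
    ∫⁻ x, (#{g ∈ s | T g x ∈ A} : ℝ≥0∞) ∂μ = #s * μ A := by
  rw [← lintegral_indicator_one hA, ← hT.lintegral_sum_comp (measurable_one.indicator hA)]
  refine lintegral_congr fun x => ?_
  rw [card_filter, Nat.cast_sum]
  exact sum_congr rfl fun g _ => by simp [Set.indicator_apply]

theorem IsErgodicAction.of_diagonal [Add G] [IsProbabilityMeasure μ]
    (hT : IsMeasurePreservingAction T μ) (hTT : IsErgodicAction (diagonalAction T) (μ.prod μ)) :
    IsErgodicAction T μ where
  toIsMeasurePreservingAction := hT
  measure_eq_zero_or_one A hA hinv := by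
    have h := hTT.measure_eq_zero_or_one (A ×ˢ Set.univ) (hA.prod .univ) fun g => by
      rw [diagonalAction, Set.preimage_prod_map_prod, hinv, Set.preimage_univ]
    simpa using h

variable [AddGroup G] [Countable G] [IsProbabilityMeasure μ]

theorem IsErgodicAction.eventuallyConst (hT : IsErgodicAction T μ) {s : Set X}
    (hs : NullMeasurableSet s μ) (hinv : ∀ g, T g ⁻¹' s =ᵐ[μ] s) : EventuallyConst s (ae μ) := by
  obtain ⟨t, -, ht, hts⟩ := hs.exists_measurable_superset_ae_eq
  have measurableSet_core : MeasurableSet (⋂ g, T g ⁻¹' t) :=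
    .iInter fun g => (hT.measurePreserving g).measurable ht
  have core_ae_eq : (⋂ g, T g ⁻¹' t : Set X) =ᵐ[μ] s := by
    rw [← Set.iInter_const (ι := G) s]
    exact Filter.EventuallyEq.countable_iInter fun g =>
      ((hT.measurePreserving g).quasiMeasurePreserving.preimage_ae_eq hts).trans (hinv g)
  have core_invariant (g : G) : T g ⁻¹' (⋂ h, T h ⁻¹' t) = ⋂ h, T h ⁻¹' t := by
    simp only [Set.preimage_iInter, ← Set.preimage_comp, ← hT.map_add]
    exact (Equiv.addRight g).surjective.iInter_comp fun h => T h ⁻¹' t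
  rw [← core_ae_eq.eventuallyConst_iff, eventuallyConst_set', ae_eq_empty, ae_eq_univ,
    prob_compl_eq_zero_iff measurableSet_core]
  exact hT.measure_eq_zero_or_one _ measurableSet_core core_invariant

theorem IsErgodicAction.exists_ae_eq_const (hT : IsErgodicAction T μ) {β : Type*}
    [MeasurableSpace β] [CountablySeparated β] [Nonempty β] {f : X → β}
    (hf : NullMeasurable f μ) (hinv : ∀ g, f ∘ T g =ᵐ[μ] f) : ∃ c, f =ᵐ[μ] const X c :=
  exists_eventuallyEq_const_of_forall_separating MeasurableSet fun _ hU =>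
    eventuallyConst_set.1 (hT.eventuallyConst (hf hU) fun g => (hinv g).preimage _)

end Actions

section MaximalInequality

variable {d : ℕ} {T : (Fin d → ℤ) → X → X}

/-- The points at which some average of `F` over a box of side at most `N` exceeds `t`. The
averages are written multiplicatively, so that the empty box contributes nothing. -/
def maximalSet (T : (Fin d → ℤ) → X → X) (F : X → ℝ≥0∞) (t : ℝ≥0∞) (N : ℕ) : Set X :=
  {x | ∃ n ≤ N, t * #(Fbox d n) < ∑ j ∈ Fbox d n, F (T j x)}

theorem monotone_maximalSet (F : X → ℝ≥0∞) (t : ℝ≥0∞) : Monotone (maximalSet T F t) :=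
  fun _ _ hNM _ ⟨n, hn, h⟩ => ⟨n, hn.trans hNM, h⟩

theorem mul_card_visits_maximalSet_le (hT : ∀ i j, T (i + j) = T i ∘ T j) (F : X → ℝ≥0∞)
    (t : ℝ≥0∞) {N K : ℕ} (hNK : N ≤ K) (x : X) :
    t * #{j ∈ Fbox d K | T j x ∈ maximalSet T F t N} ≤ 3 ^ d * ∑ i ∈ Fbox d (2 * K), F (T i x) := by
  have exists_scale (j : Fin d → ℤ) : ∃ n, T j x ∈ maximalSet T F t N →
      n ≤ N ∧ t * #(boxAt j n) < ∑ i ∈ boxAt j n, F (T i x) := by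
    by_cases hj : T j x ∈ maximalSet T F t N
    · obtain ⟨n, hn, hlt⟩ := hj
      refine ⟨n, fun _ => ⟨hn, ?_⟩⟩
      simpa only [card_boxAt, ← card_Fbox, sum_boxAt, hT, comp_apply] using hlt
    · exact ⟨0, fun hj' => absurd hj' hj⟩
  choose r hr using exists_scale
  refine (mul_card_le_sum_biUnion_boxAt _ r (fun j hj => ?_) fun j hj =>
    (hr j (mem_filter.1 hj).2).2.le).trans ?_
  · exact nonempty_of_sum_ne_zero ((zero_le).trans_lt (hr j (mem_filter.1 hj).2).2).ne'
  · gcongr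
    refine biUnion_subset.2 fun j hj i hi => ?_
    obtain ⟨hjK, hjmax⟩ := mem_filter.1 hj
    rw [← boxAt_zero, mem_boxAt] at hjK ⊢
    have hrK := (hr j hjmax).1.trans hNK
    intro k
    have hjk := hjK k
    have hik := mem_boxAt.1 hi k
    push_cast
    simp only [Pi.zero_apply] at hjk ⊢
    omega

variable [MeasurableSpace X] {μ : Measure X}

theorem IsMeasurePreservingAction.measurableSet_maximalSet (hT : IsMeasurePreservingAction T μ)
    {F : X → ℝ≥0∞} (hF : Measurable F) (t : ℝ≥0∞) (N : ℕ) :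
    MeasurableSet (maximalSet T F t N) := by
  have union_eq : maximalSet T F t N =
      ⋃ n ≤ N, {x | t * #(Fbox d n) < ∑ j ∈ Fbox d n, F (T j x)} := by
    ext x
    simp only [maximalSet, Set.mem_ofPred_eq, Set.mem_iUnion, exists_prop]
  rw [union_eq]
  exact .biUnion (Set.to_countable _) fun n _ => measurableSet_lt measurable_const
    (Finset.measurable_sum _ fun j _ => hF.comp (hT.measurePreserving j).measurable)

theorem IsMeasurePreservingAction.mul_measure_maximalSet_le (hT : IsMeasurePreservingAction T μ)
    {F : X → ℝ≥0∞} (hF : Measurable F) (t : ℝ≥0∞) (N : ℕ) :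
    t * μ (maximalSet T F t N) ≤ 6 ^ d * ∫⁻ x, F x ∂μ := by
  set E := maximalSet T F t N
  have card_ne_zero : (#(Fbox d (N + 1)) : ℝ≥0∞) ≠ 0 := by simp [card_Fbox]
  rw [← ENNReal.mul_le_mul_iff_right card_ne_zero (ENNReal.natCast_ne_top _)]
  calc (#(Fbox d (N + 1)) : ℝ≥0∞) * (t * μ E)
      = t * ∫⁻ x, (#{j ∈ Fbox d (N + 1) | T j x ∈ E} : ℝ≥0∞) ∂μ := by
        rw [hT.lintegral_card_visits (hT.measurableSet_maximalSet hF t N), mul_left_comm]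
    _ ≤ ∫⁻ x, t * (#{j ∈ Fbox d (N + 1) | T j x ∈ E} : ℝ≥0∞) ∂μ := lintegral_const_mul_le _ _
    _ ≤ ∫⁻ x, 3 ^ d * ∑ i ∈ Fbox d (2 * (N + 1)), F (T i x) ∂μ :=
        lintegral_mono fun x => mul_card_visits_maximalSet_le hT.map_add F t N.le_succ x
    _ = 3 ^ d * (#(Fbox d (2 * (N + 1))) * ∫⁻ x, F x ∂μ) := by
        rw [lintegral_const_mul' _ _ (by finiteness), hT.lintegral_sum_comp hF]
    _ = #(Fbox d (N + 1)) * (6 ^ d * ∫⁻ x, F x ∂μ) := by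
        rw [card_Fbox, card_Fbox, mul_pow, show (6 : ℝ≥0∞) = 3 * 2 by norm_num, mul_pow]
        push_cast
        ring

theorem IsMeasurePreservingAction.mul_measure_iUnion_maximalSet_le
    (hT : IsMeasurePreservingAction T μ) {F : X → ℝ≥0∞} (hF : AEMeasurable F μ) (t : ℝ≥0∞) :
    t * μ (⋃ N, maximalSet T F t N) ≤ 6 ^ d * ∫⁻ x, F x ∂μ := by
  have mk_eq : ∀ᵐ x ∂μ, ∀ j, F (T j x) = hF.mk F (T j x) :=
    ae_all_iff.2 fun j => (hT.measurePreserving j).quasiMeasurePreserving.ae hF.ae_eq_mk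
  have set_ae_eq : (⋃ N, maximalSet T F t N : Set X) =ᵐ[μ] ⋃ N, maximalSet T (hF.mk F) t N := by
    filter_upwards [mk_eq] with x hx
    refine propext ?_
    change x ∈ ⋃ N, _ ↔ x ∈ ⋃ N, _
    simp only [maximalSet, Set.mem_iUnion, Set.mem_ofPred_eq, hx]
  rw [measure_congr set_ae_eq, lintegral_congr_ae hF.ae_eq_mk,
    (monotone_maximalSet _ t).measure_iUnion, ENNReal.mul_iSup]
  exact iSup_le fun N => hT.mul_measure_maximalSet_le hF.measurable_mk t N

end MaximalInequality

section PointwiseErgodicTheorem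

variable {d : ℕ} {T : (Fin d → ℤ) → X → X} {E F : Type*} [NormedAddCommGroup E] [NormedSpace ℝ E]
  [NormedAddCommGroup F] [NormedSpace ℝ F]

/-- The average of `f` over the part of the orbit of `x` indexed by `F_n`. -/
def boxAverage (T : (Fin d → ℤ) → X → X) (f : X → E) (n : ℕ) (x : X) : E :=
  (#(Fbox d n) : ℝ)⁻¹ • ∑ j ∈ Fbox d n, f (T j x)

theorem boxAverage_add (f g : X → E) (n : ℕ) (x : X) :
    boxAverage T (f + g) n x = boxAverage T f n x + boxAverage T g n x := by
  simp only [boxAverage, Pi.add_apply, sum_add_distrib, smul_add]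

theorem boxAverage_clm_comp (L : E →L[ℝ] F) (f : X → E) (n : ℕ) (x : X) :
    boxAverage T (L ∘ f) n x = L (boxAverage T f n x) := by
  simp only [boxAverage, comp_apply, map_smul, map_sum]

theorem boxAverage_const {n : ℕ} (hn : n ≠ 0) (c : E) (x : X) :
    boxAverage T (fun _ => c) n x = c := by
  have card_ne : (#(Fbox d n) : ℝ) ≠ 0 := by rw [card_Fbox]; positivity
  rw [boxAverage, sum_const, ← Nat.cast_smul_eq_nsmul ℝ, inv_smul_smul₀ card_ne]

theorem mem_maximalSet_of_lt_enorm_boxAverage {f : X → E} {t : ℝ≥0∞} {n : ℕ} {x : X}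
    (h : t < ‖boxAverage T f n x‖ₑ) : x ∈ maximalSet T (fun x => ‖f x‖ₑ) t n := by
  have card_ne : #(Fbox d n) ≠ 0 := by
    intro hn
    simp [boxAverage, hn] at h
  refine ⟨n, le_rfl, ?_⟩
  calc t * #(Fbox d n)
      < ‖boxAverage T f n x‖ₑ * #(Fbox d n) :=
        ENNReal.mul_lt_mul_left (Nat.cast_ne_zero.2 card_ne) (ENNReal.natCast_ne_top _) h
    _ = ‖∑ j ∈ Fbox d n, f (T j x)‖ₑ := by
        rw [boxAverage, enorm_smul, enorm_inv (Nat.cast_ne_zero.2 card_ne), mul_comm, ← mul_assoc]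
        simp [ENNReal.mul_inv_cancel, card_ne]
    _ ≤ ∑ j ∈ Fbox d n, ‖f (T j x)‖ₑ := enorm_sum_le _ _

variable [MeasurableSpace X] {μ : Measure X} {f g : X → E}

/-- Almost every orbit averages `f` along the boxes `F_n` to its integral. -/
def HasErgodicLimit (T : (Fin d → ℤ) → X → X) (μ : Measure X) (f : X → E) : Prop :=
  ∀ᵐ x ∂μ, Tendsto (fun n => boxAverage T f n x) atTop (𝓝 (∫ y, f y ∂μ))

/-- The asymptotic distance at `x` between the averages of `f` and its integral. -/
def ergodicDefect (T : (Fin d → ℤ) → X → X) (μ : Measure X) (f : X → E) (x : X) : ℝ≥0∞ :=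
  limsup (fun n => ‖boxAverage T f n x - ∫ y, f y ∂μ‖ₑ) atTop

theorem tendsto_boxAverage_iff_ergodicDefect_eq_zero {x : X} :
    Tendsto (fun n => boxAverage T f n x) atTop (𝓝 (∫ y, f y ∂μ)) ↔ ergodicDefect T μ f x = 0 := by
  rw [tendsto_iff_enorm_sub_tendsto_zero]
  refine ⟨fun h => h.limsup_eq, fun h => ?_⟩
  exact tendsto_of_le_liminf_of_limsup_le (zero_le) h.le

theorem mul_measure_lt_ergodicDefect_le (hT : IsMeasurePreservingAction T μ)
    (hf : AEStronglyMeasurable f μ) {t : ℝ≥0∞} (hft : eLpNorm f 1 μ ≤ t) :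
    t * μ {x | t + t < ergodicDefect T μ f x} ≤ 6 ^ d * eLpNorm f 1 μ := by
  have subset_maximalSet :
      {x | t + t < ergodicDefect T μ f x} ⊆ ⋃ n, maximalSet T (fun x => ‖f x‖ₑ) t n := by
    intro x hx
    obtain ⟨n, hn⟩ := (frequently_lt_of_lt_limsup (by isBoundedDefault) hx.out).exists
    refine Set.mem_iUnion.2 ⟨n, mem_maximalSet_of_lt_enorm_boxAverage ?_⟩
    refine lt_of_add_lt_add_right (hn.trans_le ((enorm_sub_le).trans ?_))
    gcongr
    exact (enorm_integral_le_lintegral_enorm f).trans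
      (eLpNorm_one_eq_lintegral_enorm.symm.trans_le hft)
  rw [eLpNorm_one_eq_lintegral_enorm]
  calc t * μ {x | t + t < ergodicDefect T μ f x}
      ≤ t * μ (⋃ n, maximalSet T (fun x => ‖f x‖ₑ) t n) := by gcongr
    _ ≤ 6 ^ d * ∫⁻ x, ‖f x‖ₑ ∂μ := hT.mul_measure_iUnion_maximalSet_le hf.enorm t

theorem HasErgodicLimit.ergodicDefect_le_sub (hg : HasErgodicLimit T μ g) (hfi : Integrable f μ)
    (hgi : Integrable g μ) : ∀ᵐ x ∂μ, ergodicDefect T μ f x ≤ ergodicDefect T μ (f - g) x := by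
  filter_upwards [hg] with x hx
  rw [tendsto_iff_enorm_sub_tendsto_zero] at hx
  refine (limsup_le_limsup ?_).trans_eq (ENNReal.limsup_add_of_right_tendsto_zero hx _)
  refine .of_forall fun n => ?_
  have average_eq := boxAverage_add (T := T) (f - g) g n x
  rw [sub_add_cancel] at average_eq
  have integral_eq : ∫ y, f y ∂μ = ∫ y, (f - g) y ∂μ + ∫ y, g y ∂μ := by
    rw [integral_sub' hfi hgi, sub_add_cancel]
  simp only [average_eq, integral_eq, Pi.add_apply, add_sub_add_comm]
  exact enorm_add_le _ _

theorem HasErgodicLimit.congr (hT : IsMeasurePreservingAction T μ) (hf : HasErgodicLimit T μ f)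
    (hfg : f =ᵐ[μ] g) : HasErgodicLimit T μ g := by
  have orbit_eq : ∀ᵐ x ∂μ, ∀ j, f (T j x) = g (T j x) :=
    ae_all_iff.2 fun j => (hT.measurePreserving j).quasiMeasurePreserving.ae hfg
  filter_upwards [hf, orbit_eq] with x hx hfgx
  simpa only [boxAverage, hfgx, integral_congr_ae hfg] using hx

theorem HasErgodicLimit.add (hf : HasErgodicLimit T μ f) (hg : HasErgodicLimit T μ g)
    (hfi : Integrable f μ) (hgi : Integrable g μ) : HasErgodicLimit T μ (f + g) := by
  filter_upwards [hf, hg] with x hfx hgx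
  rw [integral_add' hfi hgi]
  simpa only [boxAverage_add] using hfx.add hgx

theorem HasErgodicLimit.clm_comp [CompleteSpace E] [CompleteSpace F] (hf : HasErgodicLimit T μ f)
    (hfi : Integrable f μ) (L : E →L[ℝ] F) : HasErgodicLimit T μ (L ∘ f) := by
  filter_upwards [hf] with x hfx
  simpa only [boxAverage_clm_comp, comp_apply, L.integral_comp_comm hfi]
    using! (L.continuous.tendsto _).comp hfx

theorem HasErgodicLimit.const [CompleteSpace E] [IsProbabilityMeasure μ] (c : E) :
    HasErgodicLimit T μ fun _ => c := by
  refine .of_forall fun x => ?_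
  rw [integral_const, probReal_univ, one_smul]
  refine tendsto_const_nhds.congr' ?_
  filter_upwards [eventually_ne_atTop 0] with n hn
  exact (boxAverage_const hn c x).symm

theorem HasErgodicLimit.coboundary_of_bounded (hT : IsMeasurePreservingAction T μ)
    (hf : Integrable f μ) {M : ℝ} (hM : ∀ x, ‖f x‖ ≤ M) (j : Fin d → ℤ) :
    HasErgodicLimit T μ (f ∘ T j - f) := by
  have integral_eq_zero : ∫ x, (f ∘ T j - f) x ∂μ = 0 := by
    have integral_comp : ∫ x, f (T j x) ∂μ = ∫ x, f x ∂μ := by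
      conv_rhs => rw [← (hT.measurePreserving j).map_eq]
      refine (integral_map (hT.measurePreserving j).aemeasurable ?_).symm
      rw [(hT.measurePreserving j).map_eq]
      exact hf.1
    rw [integral_sub' ((hT.measurePreserving j).integrable_comp_of_integrable hf) hf]
    simp only [comp_apply, integral_comp, sub_self]
  refine .of_forall fun x => ?_
  rw [integral_eq_zero]
  refine (tendsto_inv_card_smul_sum_Fbox_shift_sub (fun i => hM (T i x)) j).congr fun n => ?_
  simp only [boxAverage, Pi.sub_apply, comp_apply, add_comm _ j, hT.map_add]

theorem HasErgodicLimit.of_tendsto_eLpNorm {ι : Type*} {l : Filter ι} [l.NeBot]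
    (hT : IsMeasurePreservingAction T μ) {g : ι → X → E} (hg : ∀ i, HasErgodicLimit T μ (g i))
    (hfi : Integrable f μ) (hgi : ∀ i, Integrable (g i) μ)
    (hlim : Tendsto (fun i => eLpNorm (f - g i) 1 μ) l (𝓝 0)) : HasErgodicLimit T μ f := by
  have measure_lt_eq_zero (t : ℝ≥0∞) (ht : t ≠ 0) :
      μ {x | t + t < ergodicDefect T μ f x} = 0 := by
    have bound_tendsto : Tendsto (fun i => 6 ^ d * eLpNorm (f - g i) 1 μ) l (𝓝 0) := by
      simpa using ENNReal.Tendsto.const_mul hlim (.inr (ENNReal.pow_ne_top (by simp)))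
    have mul_le_zero : t * μ {x | t + t < ergodicDefect T μ f x} ≤ 0 := by
      refine ge_of_tendsto bound_tendsto ?_
      filter_upwards [hlim.eventually_le_const (pos_iff_ne_zero.2 ht)] with i hi
      refine le_trans ?_ (mul_measure_lt_ergodicDefect_le hT (hfi.sub (hgi i)).1 hi)
      gcongr 1
      refine measure_mono_ae ?_
      filter_upwards [(hg i).ergodicDefect_le_sub hfi (hgi i)] with x hx hlt
      exact lt_of_lt_of_le hlt hx
    exact (mul_eq_zero.1 (nonpos_iff_eq_zero.1 mul_le_zero)).resolve_left ht
  have defect_le : ∀ᵐ x ∂μ, ∀ k : ℕ, ergodicDefect T μ f x ≤ (k : ℝ≥0∞)⁻¹ + (k : ℝ≥0∞)⁻¹ :=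
    ae_all_iff.2 fun k => by
      simpa only [ae_iff, not_le] using measure_lt_eq_zero _ (by simp)
  filter_upwards [defect_le] with x hx
  have inv_add_inv_tendsto : Tendsto (fun k : ℕ => (k : ℝ≥0∞)⁻¹ + (k : ℝ≥0∞)⁻¹) atTop (𝓝 0) := by
    simpa using ENNReal.tendsto_inv_nat_nhds_zero.add ENNReal.tendsto_inv_nat_nhds_zero
  rw [tendsto_boxAverage_iff_ergodicDefect_eq_zero, ← nonpos_iff_eq_zero]
  exact ge_of_tendsto' inv_add_inv_tendsto hx

variable [IsProbabilityMeasure μ]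

theorem isClosed_setOf_hasErgodicLimit (hT : IsMeasurePreservingAction T μ) (p : ℝ≥0∞)
    [Fact (1 ≤ p)] : IsClosed {f : Lp E p μ | HasErgodicLimit T μ f} := by
  refine IsSeqClosed.isClosed fun g f hg hgf => ?_
  have integrable (u : Lp E p μ) : Integrable u μ := (Lp.memLp u).integrable Fact.out
  refine .of_tendsto_eLpNorm (l := atTop) hT hg (integrable f) (fun i => integrable (g i)) ?_
  have eLpNorm_tendsto := (Lp.tendsto_Lp_iff_tendsto_eLpNorm' g f).1 hgf
  refine tendsto_of_tendsto_of_tendsto_of_le_of_le tendsto_const_nhds eLpNorm_tendsto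
    (fun _ => zero_le) fun i => ?_
  rw [eLpNorm_sub_comm]
  exact eLpNorm_le_eLpNorm_of_exponent_le Fact.out ((integrable (g i)).sub (integrable f)).1

theorem HasErgodicLimit.coboundary (hT : IsMeasurePreservingAction T μ) (hf : Integrable f μ)
    (j : Fin d → ℤ) : HasErgodicLimit T μ (f ∘ T j - f) := by
  have hTj := hT.measurePreserving j
  refine Integrable.induction (fun f => HasErgodicLimit T μ (f ∘ T j - f)) ?_ ?_ ?_ ?_ hf
  · intro c s hs _
    exact .coboundary_of_bounded hT ((integrable_const c).indicator hs)
      (fun x => norm_indicator_le_norm_self _ x) j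
  · intro f g _ hf hg hfj hgj
    rw [show (f + g) ∘ T j - (f + g) = f ∘ T j - f + (g ∘ T j - g) from add_sub_add_comm ..]
    exact hfj.add hgj ((hTj.integrable_comp_of_integrable hf).sub hf)
      ((hTj.integrable_comp_of_integrable hg).sub hg)
  · have continuous_coboundary :
        Continuous fun f : Lp E 1 μ => Lp.compMeasurePreserving (T j) hTj f - f :=
      (Lp.isometry_compMeasurePreserving hTj).continuous.sub continuous_id
    convert (isClosed_setOf_hasErgodicLimit hT 1).preimage continuous_coboundary using 1
    ext f
    have coboundary_ae_eq : ⇑(Lp.compMeasurePreserving (T j) hTj f - f) =ᵐ[μ] ⇑f ∘ T j - ⇑f :=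
      (Lp.coeFn_sub _ _).trans ((Lp.coeFn_compMeasurePreserving f hTj).sub .rfl)
    exact ⟨fun h => h.congr hT coboundary_ae_eq.symm, fun h => h.congr hT coboundary_ae_eq⟩
  · intro f g hfg _ hfj
    exact hfj.congr hT ((hTj.quasiMeasurePreserving.ae_eq_comp hfg).sub hfg)

/-- The `L²` functions satisfying the pointwise ergodic theorem, as a subspace of `L²`. -/
def ergodicSubmodule (hT : IsMeasurePreservingAction T μ) : Submodule ℝ (Lp ℝ 2 μ) where
  carrier := {f | HasErgodicLimit T μ f}
  add_mem' {f g} hf hg :=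
    (hf.add hg ((Lp.memLp f).integrable one_le_two) ((Lp.memLp g).integrable one_le_two)).congr hT
      (Lp.coeFn_add f g).symm
  zero_mem' := (HasErgodicLimit.const 0).congr hT (Lp.coeFn_zero ℝ 2 μ).symm
  smul_mem' c f hf :=
    (hf.clm_comp ((Lp.memLp f).integrable one_le_two) (ContinuousLinearMap.lsmul ℝ ℝ c)).congr hT
      (Lp.coeFn_smul c f).symm

theorem compMeasurePreserving_eq_of_mem_orthogonal (hT : IsMeasurePreservingAction T μ)
    {f : Lp ℝ 2 μ} (hf : f ∈ (ergodicSubmodule hT)ᗮ) (j : Fin d → ℤ) :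
    Lp.compMeasurePreserving (T j) (hT.measurePreserving j) f = f := by
  set Uf := Lp.compMeasurePreserving (T j) (hT.measurePreserving j) f
  have norm_eq : ‖Uf‖ = ‖f‖ := Lp.norm_compMeasurePreserving f _
  have coboundary_mem : Uf - f ∈ ergodicSubmodule hT := by
    refine (HasErgodicLimit.coboundary hT ((Lp.memLp f).integrable one_le_two) j).congr hT ?_
    exact ((Lp.coeFn_sub _ _).trans ((Lp.coeFn_compMeasurePreserving f _).sub .rfl)).symm
  have inner_eq : inner ℝ Uf f = ‖f‖ ^ 2 := by
    have inner_eq_zero := (Submodule.mem_orthogonal _ _).1 hf _ coboundary_mem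
    rwa [inner_sub_left, real_inner_self_eq_norm_sq, sub_eq_zero] at inner_eq_zero
  have norm_sub_sq_eq : ‖Uf - f‖ ^ 2 = 0 := by
    rw [norm_sub_sq_real, norm_eq, inner_eq]
    ring
  exact sub_eq_zero.1 (norm_eq_zero.1 (sq_eq_zero_iff.1 norm_sub_sq_eq))

theorem ergodicSubmodule_eq_top (hT : IsErgodicAction T μ) :
    ergodicSubmodule hT.toIsMeasurePreservingAction = ⊤ := by
  set S := ergodicSubmodule hT.toIsMeasurePreservingAction
  have isClosed_S : IsClosed (S : Set (Lp ℝ 2 μ)) :=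
    isClosed_setOf_hasErgodicLimit hT.toIsMeasurePreservingAction 2
  have : CompleteSpace S := isClosed_S.completeSpace_coe
  rw [← Submodule.orthogonal_eq_bot_iff, Submodule.eq_bot_iff]
  intro f hf
  obtain ⟨c, hc⟩ := hT.exists_ae_eq_const (Lp.memLp f).1.aemeasurable.nullMeasurable fun j => by
    have h := Lp.coeFn_compMeasurePreserving f (hT.measurePreserving j)
    rw [compMeasurePreserving_eq_of_mem_orthogonal _ hf] at h
    exact h.symm
  have mem_S : f ∈ S := (HasErgodicLimit.const c).congr hT.toIsMeasurePreservingAction hc.symm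
  exact inner_self_eq_zero.1 ((Submodule.mem_orthogonal _ _).1 hf f mem_S)

theorem IsErgodicAction.hasErgodicLimit [CompleteSpace E] (hT : IsErgodicAction T μ)
    (hf : Integrable f μ) : HasErgodicLimit T μ f := by
  have hT' := hT.toIsMeasurePreservingAction
  refine Integrable.induction (HasErgodicLimit T μ) ?_ ?_ ?_ ?_ hf
  · intro c s hs _
    set u : Lp ℝ 2 μ := indicatorConstLp 2 hs (measure_ne_top μ s) 1
    have u_ae_eq : u =ᵐ[μ] s.indicator fun _ => 1 := indicatorConstLp_coeFn
    have u_good : HasErgodicLimit T μ u := by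
      have mem_top : u ∈ (⊤ : Submodule ℝ (Lp ℝ 2 μ)) := Submodule.mem_top
      rwa [← ergodicSubmodule_eq_top hT] at mem_top
    have indicator_eq : (s.indicator fun _ => c) =
        ContinuousLinearMap.toSpanSingleton ℝ c ∘ s.indicator fun _ => (1 : ℝ) := by
      ext x
      by_cases hx : x ∈ s <;> simp [hx]
    rw [indicator_eq]
    exact (u_good.congr hT' u_ae_eq).clm_comp ((integrable_const 1).indicator hs) _
  · exact fun f g _ hfi hgi hf hg => hf.add hg hfi hgi
  · exact isClosed_setOf_hasErgodicLimit hT' 1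
  · exact fun f g hfg _ hf => hf.congr hT' hfg

end PointwiseErgodicTheorem

section MeanSensitivityOfWeakMixing

variable {d : ℕ} {T : (Fin d → ℤ) → X → X}

theorem sum_div_card_eq_boxAverage (g : X → ℝ) (n : ℕ) (x : X) :
    (∑ j ∈ Fbox d n, g (T j x)) / #(Fbox d n) = boxAverage T g n x := by
  rw [boxAverage, smul_eq_mul, div_eq_inv_mul]

variable [MeasurableSpace X] {μ : Measure X} {f : X → ℂ}

theorem exists_ae_eq_const_of_ae_prod_eq [SFinite μ] [NeZero μ] {β : Type*} {g : X → β}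
    (hg : ∀ᵐ p ∂μ.prod μ, g p.1 = g p.2) : ∃ c, g =ᵐ[μ] fun _ => c := by
  obtain ⟨x, hx⟩ := (Measure.ae_ae_of_ae_prod hg).exists
  exact ⟨g x, hx.mono fun _ => Eq.symm⟩

variable [IsProbabilityMeasure μ]

theorem IsErgodicAction.ae_genericSq (hT : IsErgodicAction T μ)
    (hf : MemLp f 2 μ) : ∀ᵐ x ∂μ, genericSq μ T f x := by
  filter_upwards [hT.hasErgodicLimit (hf.integrable_norm_pow two_ne_zero)] with x hx
  simpa only [genericSq, sum_div_card_eq_boxAverage (fun y => ‖f y‖ ^ 2)] using hx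

theorem memLp_fst_sub_snd {E : Type*} [NormedAddCommGroup E] {g : X → E} {p : ℝ≥0∞}
    (hg : MemLp g p μ) : MemLp (fun q : X × X => g q.1 - g q.2) p (μ.prod μ) :=
  (hg.comp_measurePreserving measurePreserving_fst).sub
    (hg.comp_measurePreserving measurePreserving_snd)

theorem IsErgodicAction.ae_dF_eq_sqrt_integral
    (hTT : IsErgodicAction (diagonalAction T) (μ.prod μ)) (hf : MemLp f 2 μ) :
    ∀ᵐ p ∂μ.prod μ, dF T f p.1 p.2 = √(∫ q, ‖f q.1 - f q.2‖ ^ 2 ∂μ.prod μ) := by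
  have integrable_sq := (memLp_fst_sub_snd hf).integrable_norm_pow two_ne_zero
  filter_upwards [hTT.hasErgodicLimit integrable_sq] with p hp
  simp only [← sum_div_card_eq_boxAverage] at hp
  exact hp.sqrt.limsup_eq

theorem integral_norm_fst_sub_snd_sq_pos (hf : MemLp f 2 μ)
    (hconst : ¬∃ c, f =ᵐ[μ] fun _ => c) : 0 < ∫ q, ‖f q.1 - f q.2‖ ^ 2 ∂μ.prod μ := by
  have integrable_sq := (memLp_fst_sub_snd hf).integrable_norm_pow two_ne_zero
  refine (integral_nonneg fun _ => by positivity).lt_of_ne' fun integral_eq_zero => hconst ?_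
  refine exists_ae_eq_const_of_ae_prod_eq ?_
  rw [integral_eq_zero_iff_of_nonneg (fun _ => by positivity) integrable_sq] at integral_eq_zero
  filter_upwards [integral_eq_zero] with q hq
  simpa [sub_eq_zero] using hq

theorem meanSensitiveFun_of_isErgodicAction_diagonal (hT : IsMeasurePreservingAction T μ)
    (hTT : IsErgodicAction (diagonalAction T) (μ.prod μ)) (hf : MemLp f 2 μ)
    (hconst : ¬∃ c, f =ᵐ[μ] fun _ => c) : MeanSensitiveFun μ T f := by
  have sqrt_pos := Real.sqrt_pos.2 (integral_norm_fst_sub_snd_sq_pos hf hconst)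
  have generic := (IsErgodicAction.of_diagonal hT hTT).ae_genericSq hf
  refine ⟨_, half_pos sqrt_pos, fun A _ hμA => ?_⟩
  have frequently_mem : ∃ᵐ p ∂μ.prod μ, p ∈ A ×ˢ A := by
    rw [frequently_ae_mem_iff, Measure.prod_prod]
    exact mul_ne_zero hμA.ne' hμA.ne'
  obtain ⟨p, ⟨hx, hy⟩, dF_eq, generic_x, generic_y⟩ := (frequently_mem.and_eventually
    ((hTT.ae_dF_eq_sqrt_integral hf).and ((Measure.quasiMeasurePreserving_fst.ae generic).and
      (Measure.quasiMeasurePreserving_snd.ae generic)))).exists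
  exact ⟨p.1, hx, p.2, hy, generic_x, generic_y, (half_lt_self sqrt_pos).trans_eq dF_eq.symm⟩

end MeanSensitivityOfWeakMixing

section Sections

variable {Y : Type*} [MeasurableSpace X] [MeasurableSpace Y]

/-- The measurable subsets of `X × Y` with only finitely many different sections over points of
`X`. They form a ring generating the product `σ`-algebra, hence are dense in measure. -/
def finiteSectionSets (X Y : Type*) [MeasurableSpace X] [MeasurableSpace Y] : Set (Set (X × Y)) :=
  {A | MeasurableSet A ∧ (Set.range fun x => Prod.mk x ⁻¹' A).Finite}

theorem isSetRing_finiteSectionSets : IsSetRing (finiteSectionSets X Y) where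
  empty_mem := ⟨.empty, by simpa only [Set.preimage_empty] using Set.finite_range_const⟩
  union_mem {A B} hA hB := by
    refine ⟨hA.1.union hB.1, (hA.2.image2 (· ∪ ·) hB.2).subset ?_⟩
    rintro _ ⟨x, rfl⟩
    exact ⟨_, ⟨x, rfl⟩, _, ⟨x, rfl⟩, rfl⟩
  sdiff_mem {A B} hA hB := by
    refine ⟨hA.1.diff hB.1, (hA.2.image2 (· \ ·) hB.2).subset ?_⟩
    rintro _ ⟨x, rfl⟩
    exact ⟨_, ⟨x, rfl⟩, _, ⟨x, rfl⟩, rfl⟩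

theorem prod_mem_finiteSectionSets {D : Set X} {C : Set Y} (hD : MeasurableSet D)
    (hC : MeasurableSet C) : D ×ˢ C ∈ finiteSectionSets X Y := by
  refine ⟨hD.prod hC, (Set.toFinite {C, ∅}).subset ?_⟩
  rintro _ ⟨x, rfl⟩
  by_cases hx : x ∈ D <;> simp [hx]

theorem generateFrom_finiteSectionSets :
    generateFrom (finiteSectionSets X Y) = Prod.instMeasurableSpace := by
  refine le_antisymm (generateFrom_le fun A hA => hA.1) ?_
  rw [← generateFrom_prod]
  refine generateFrom_mono ?_
  rintro _ ⟨D, hD, C, hC, rfl⟩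
  exact prod_mem_finiteSectionSets hD hC

/-- The function `x ↦ ν (A_x ∩ C)`, where `A_x` is the section of `A` over `x`. -/
def sectionMeasure (ν : Measure Y) (A : Set (X × Y)) (C : Set Y) (x : X) : ℂ :=
  ν.real (Prod.mk x ⁻¹' A ∩ C)

variable {ν : Measure Y} {A : Set (X × Y)} {C : Set Y}

theorem measurable_sectionMeasure [SFinite ν] (hA : MeasurableSet A) (hC : MeasurableSet C) :
    Measurable (sectionMeasure ν A C) := by
  have section_eq (x : X) : Prod.mk x ⁻¹' A ∩ C = Prod.mk x ⁻¹' (A ∩ Set.univ ×ˢ C) := by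
    ext y
    simp
  refine Complex.measurable_ofReal.comp ?_
  simp only [section_eq]
  exact (measurable_measure_prodMk_left (hA.inter (MeasurableSet.univ.prod hC))).ennreal_toReal

theorem norm_sectionMeasure_sub_le [IsFiniteMeasure ν] (hA : MeasurableSet A)
    (hC : MeasurableSet C) (x y : X) :
    ‖sectionMeasure ν A C x - sectionMeasure ν A C y‖ ≤
      ν.real ((Prod.mk x ⁻¹' A) ∆ (Prod.mk y ⁻¹' A)) := by
  have measurable_section (z : X) : NullMeasurableSet (Prod.mk z ⁻¹' A ∩ C) ν :=
    ((measurable_prodMk_left hA).inter hC).nullMeasurableSet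
  rw [sectionMeasure, sectionMeasure, ← Complex.ofReal_sub, Complex.norm_real, Real.norm_eq_abs]
  refine (abs_measureReal_sub_le_measureReal_symmDiff (measurable_section x)
    (measurable_section y)).trans (measureReal_mono ?_)
  rw [← Set.inter_symmDiff_distrib_right]
  exact Set.inter_subset_left

variable {μ : Measure X}

theorem IsMeasurePreservingAction.sectionMeasure_comp {G : Type*} [Add G] {T : G → X → X}
    (hT : IsMeasurePreservingAction T μ) {A : Set (X × X)} {C : Set X}
    (hA : MeasurableSet A) (hinv : ∀ j, diagonalAction T j ⁻¹' A = A) (hC : MeasurableSet C)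
    (j : G) (x : X) :
    sectionMeasure μ A C (T j x) = sectionMeasure μ A (T j ⁻¹' C) x := by
  have section_eq : Prod.mk x ⁻¹' A ∩ T j ⁻¹' C = T j ⁻¹' (Prod.mk (T j x) ⁻¹' A ∩ C) := by
    conv_lhs => rw [← hinv j]
    rfl
  rw [sectionMeasure, sectionMeasure, section_eq, (hT.measurePreserving j).measureReal_preimage
    ((measurable_prodMk_left hA).inter hC).nullMeasurableSet]

theorem measure_inter_prod_eq_of_section_ae_const [SFinite μ] [SFinite ν] {c : ℝ≥0∞}
    (hA : MeasurableSet A) (hc : ∀ᵐ x ∂μ, ν (Prod.mk x ⁻¹' A ∩ C) = c) (D : Set X) :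
    μ.prod ν (A ∩ D ×ˢ C) = c * μ D := by
  rw [← Measure.restrict_apply hA, ← Measure.prod_restrict, Measure.prod_apply hA]
  simp only [Measure.restrict_apply (measurable_prodMk_left hA)]
  rw [lintegral_congr_ae (ae_restrict_of_ae hc), lintegral_const, Measure.restrict_apply_univ]

theorem measure_preimage_swap_inter_prod [SFinite μ] [SFinite ν] (hA : MeasurableSet A)
    {D : Set X} (hD : MeasurableSet D) (hC : MeasurableSet C) :
    ν.prod μ (Prod.swap ⁻¹' A ∩ C ×ˢ D) = μ.prod ν (A ∩ D ×ˢ C) := by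
  rw [← Set.preimage_swap_prod, ← Set.preimage_inter,
    Measure.measurePreserving_swap.measure_preimage (hA.inter (hD.prod hC)).nullMeasurableSet]

theorem measure_eq_zero_or_one_of_forall_inter_prod [IsProbabilityMeasure μ]
    [IsProbabilityMeasure ν] (hA : MeasurableSet A)
    (h : ∀ D C, MeasurableSet D → MeasurableSet C →
      μ.prod ν (A ∩ D ×ˢ C) = μ.prod ν A * (μ D * ν C)) :
    μ.prod ν A = 0 ∨ μ.prod ν A = 1 := by
  have restrict_eq : (μ.prod ν).restrict A = μ.prod ν A • μ.prod ν := by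
    refine ext_of_generate_finite _ generateFrom_prod.symm isPiSystem_prod ?_ (by simp)
    rintro _ ⟨D, hD, C, hC, rfl⟩
    rw [Measure.restrict_apply (hD.prod hC), Set.inter_comm, h D C hD hC, Measure.smul_apply,
      smul_eq_mul, Measure.prod_prod]
  refine measure_eq_zero_or_one_of_indepSet_self ((indepSet_iff_measure_inter_eq_mul hA hA _).2 ?_)
  rw [← Measure.restrict_apply hA, restrict_eq, Measure.smul_apply, smul_eq_mul]

variable [IsFiniteMeasure μ] [IsFiniteMeasure ν]

theorem exists_finiteSectionSets_measure_symmDiff_lt (hA : MeasurableSet A) {ε : ℝ≥0∞}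
    (hε : 0 < ε) : ∃ B ∈ finiteSectionSets X Y, μ.prod ν (B ∆ A) < ε := by
  refine exists_measure_symmDiff_lt_of_generateFrom_isSetRing isSetRing_finiteSectionSets
    ⟨{Set.univ}, Set.countable_singleton _, ?_, ?_⟩ generateFrom_finiteSectionSets.symm hA hε
  · rw [Set.singleton_subset_iff, ← Set.univ_prod_univ]
    exact prod_mem_finiteSectionSets .univ .univ
  · rw [Set.sUnion_singleton, Set.compl_univ, measure_empty]

theorem exists_pos_measure_section_symmDiff_lt [NeZero μ] (hA : MeasurableSet A) {ε : ℝ≥0∞}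
    (hε : 0 < ε) : ∃ C, MeasurableSet C ∧ 0 < μ {x | ν ((Prod.mk x ⁻¹' A) ∆ C) < ε} := by
  obtain ⟨B, ⟨measurable_B, finite_B⟩, hBA⟩ := exists_finiteSectionSets_measure_symmDiff_lt
    (μ := μ) (ν := ν) hA (ENNReal.mul_pos hε.ne' (NeZero.ne (μ .univ)))
  by_contra! h
  have section_ge : ∀ᵐ x ∂μ, ∀ C ∈ Set.range fun x => Prod.mk x ⁻¹' B,
      ε ≤ ν ((Prod.mk x ⁻¹' A) ∆ C) := by
    refine (ae_ball_iff finite_B.countable).2 ?_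
    rintro _ ⟨y, rfl⟩
    simpa only [ae_iff, not_le, nonpos_iff_eq_zero]
      using h _ (measurable_prodMk_left measurable_B)
  refine hBA.not_ge ?_
  calc ε * μ .univ = ∫⁻ _, ε ∂μ := (lintegral_const ε).symm
    _ ≤ ∫⁻ x, ν (Prod.mk x ⁻¹' (B ∆ A)) ∂μ := lintegral_mono_ae <| by
        filter_upwards [section_ge] with x hx
        rw [symmDiff_comm]
        exact hx _ ⟨x, rfl⟩
    _ = μ.prod ν (B ∆ A) := (Measure.prod_apply (measurable_B.symmDiff hA)).symm

theorem exists_pos_measure_forall_section_symmDiff_lt [NeZero μ] (hA : MeasurableSet A)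
    {ε : ℝ≥0∞} (hε : 0 < ε) : ∃ S, MeasurableSet S ∧ 0 < μ S ∧
      ∀ x ∈ S, ∀ y ∈ S, ν ((Prod.mk x ⁻¹' A) ∆ (Prod.mk y ⁻¹' A)) < ε := by
  obtain ⟨C, hC, pos⟩ := exists_pos_measure_section_symmDiff_lt (μ := μ) (ν := ν) hA
    (ENNReal.half_pos hε.ne')
  have measurable_section : Measurable fun x => ν ((Prod.mk x ⁻¹' A) ∆ C) := by
    have section_eq (x : X) :
        (Prod.mk x ⁻¹' A) ∆ C = Prod.mk x ⁻¹' (A ∆ (Set.univ ×ˢ C)) := by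
      ext y
      simp [Set.mem_symmDiff]
    simp only [section_eq]
    exact measurable_measure_prodMk_left (hA.symmDiff (MeasurableSet.univ.prod hC))
  refine ⟨_, measurableSet_lt measurable_section measurable_const, pos, fun x hx y hy => ?_⟩
  calc ν ((Prod.mk x ⁻¹' A) ∆ (Prod.mk y ⁻¹' A))
      ≤ ν ((Prod.mk x ⁻¹' A) ∆ C) + ν (C ∆ (Prod.mk y ⁻¹' A)) := measure_symmDiff_le _ _ _
    _ < ε / 2 + ε / 2 := ENNReal.add_lt_add hx (by rw [symmDiff_comm]; exact hy)
    _ = ε := ENNReal.add_halves ε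

end Sections

section WeakMixingOfMeanSensitivity

variable {d : ℕ} {T : (Fin d → ℤ) → X → X}

theorem dF_le_of_forall_norm_sub_le {f : X → ℂ} {x y : X} {ε : ℝ}
    (h : ∀ j, ‖f (T j x) - f (T j y)‖ ≤ ε) : dF T f x y ≤ ε := by
  have hε : 0 ≤ ε := (norm_nonneg _).trans (h 0)
  refine limsup_le_of_le (isCoboundedUnder_le_of_le atTop fun n => Real.sqrt_nonneg _)
    (.of_forall fun n => ?_)
  rw [Real.sqrt_le_left hε]
  refine div_le_of_le_mul₀ (by positivity) (by positivity) ?_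
  rw [mul_comm, ← nsmul_eq_mul]
  exact sum_le_card_nsmul _ _ _ fun j _ => pow_le_pow_left₀ (norm_nonneg _) (h j) 2

variable [MeasurableSpace X] {μ : Measure X} {A : Set (X × X)} {C : Set X}

variable [IsProbabilityMeasure μ]

theorem IsMeasurePreservingAction.not_meanSensitiveFun_sectionMeasure
    (hT : IsMeasurePreservingAction T μ) (hA : MeasurableSet A)
    (hinv : ∀ j, diagonalAction T j ⁻¹' A = A) (hC : MeasurableSet C) :
    ¬MeanSensitiveFun μ T (sectionMeasure μ A C) := by
  rintro ⟨ε, hε, sensitive⟩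
  obtain ⟨S, hS, pos, hclose⟩ := exists_pos_measure_forall_section_symmDiff_lt (μ := μ) (ν := μ) hA
    (ENNReal.ofReal_pos.2 hε)
  obtain ⟨x, hx, y, hy, -, -, hlt⟩ := sensitive S hS pos
  refine hlt.not_ge (dF_le_of_forall_norm_sub_le fun j => ?_)
  rw [hT.sectionMeasure_comp hA hinv hC, hT.sectionMeasure_comp hA hinv hC]
  refine (norm_sectionMeasure_sub_le hA ((hT.measurePreserving j).measurable hC) x y).trans ?_
  exact ENNReal.toReal_le_of_le_ofReal hε.le (hclose x hx y hy).le

theorem measure_inter_prod_eq_mul_of_meanSensitive (hT : IsMeasurePreservingAction T μ)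
    (hsens : ∀ f : X → ℂ, MemLp f 2 μ → (¬∃ c, f =ᵐ[μ] fun _ => c) → MeanSensitiveFun μ T f)
    (hA : MeasurableSet A) (hinv : ∀ j, diagonalAction T j ⁻¹' A = A) (hC : MeasurableSet C)
    (D : Set X) : μ.prod μ (A ∩ D ×ˢ C) = μ.prod μ (A ∩ Set.univ ×ˢ C) * μ D := by
  have memLp_section : MemLp (sectionMeasure μ A C) 2 μ := by
    refine .of_bound (measurable_sectionMeasure hA hC).aestronglyMeasurable 1 <|
      .of_forall fun x => ?_
    rw [sectionMeasure, Complex.norm_real, Real.norm_of_nonneg measureReal_nonneg]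
    exact measureReal_le_one
  obtain ⟨c, hc⟩ : ∃ c, sectionMeasure μ A C =ᵐ[μ] fun _ => c := by
    by_contra hconst
    exact hT.not_meanSensitiveFun_sectionMeasure hA hinv hC (hsens _ memLp_section hconst)
  have section_ae_const : ∀ᵐ x ∂μ, μ (Prod.mk x ⁻¹' A ∩ C) = ENNReal.ofReal c.re := by
    filter_upwards [hc] with x hx
    rw [← hx, sectionMeasure, Complex.ofReal_re, ofReal_measureReal]
  rw [measure_inter_prod_eq_of_section_ae_const hA section_ae_const,
    measure_inter_prod_eq_of_section_ae_const hA section_ae_const, measure_univ, mul_one]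

theorem isErgodicAction_diagonal_of_meanSensitive (hT : IsMeasurePreservingAction T μ)
    (hsens : ∀ f : X → ℂ, MemLp f 2 μ → (¬∃ c, f =ᵐ[μ] fun _ => c) → MeanSensitiveFun μ T f) :
    IsErgodicAction (diagonalAction T) (μ.prod μ) where
  toIsMeasurePreservingAction := hT.diagonal
  measure_eq_zero_or_one A hA hinv := by
    have swap_invariant (j : Fin d → ℤ) :
        diagonalAction T j ⁻¹' (Prod.swap ⁻¹' A) = Prod.swap ⁻¹' A := by
      conv_rhs => rw [← hinv j]
      rfl
    have split_snd {C : Set X} (hC : MeasurableSet C) :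
        μ.prod μ (A ∩ Set.univ ×ˢ C) = μ.prod μ A * μ C := by
      rw [← measure_preimage_swap_inter_prod hA .univ hC,
        measure_inter_prod_eq_mul_of_meanSensitive hT hsens (measurable_swap hA) swap_invariant
          .univ, measure_preimage_swap_inter_prod hA .univ .univ, Set.univ_prod_univ,
        Set.inter_univ]
    refine measure_eq_zero_or_one_of_forall_inter_prod hA fun D C _ hC => ?_
    rw [measure_inter_prod_eq_mul_of_meanSensitive hT hsens hA hinv hC, split_snd hC, mul_assoc,
      mul_comm (μ C)]

end WeakMixingOfMeanSensitivity

theorem stmt3_general {d : ℕ} [MeasurableSpace X] (μ : Measure X) [IsProbabilityMeasure μ]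
    (T : (Fin d → ℤ) → X → X) (hT : ∀ j, MeasurePreserving (T j) μ μ)
    (hTadd : ∀ i j, T (i + j) = T i ∘ T j) :
    (∀ A : Set (X × X), MeasurableSet A →
        (∀ j, (fun p : X × X => (T j p.1, T j p.2)) ⁻¹' A = A) →
        (μ.prod μ) A = 0 ∨ (μ.prod μ) A = 1) ↔
      ∀ f : X → ℂ, MemLp f 2 μ → (¬∃ c : ℂ, f =ᵐ[μ] fun _ => c) → MeanSensitiveFun μ T f := by
  have action : IsMeasurePreservingAction T μ := ⟨hT, hTadd⟩
  constructor
  · intro weakMixing f hf hconst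
    exact meanSensitiveFun_of_isErgodicAction_diagonal action ⟨action.diagonal, weakMixing⟩ hf
      hconst
  · intro sensitive
    exact (isErgodicAction_diagonal_of_meanSensitive action sensitive).measure_eq_zero_or_one

/-- an ergodic MPS is weakly mixing (the product action on `(X×X, μ×μ)` is
ergodic) iff every non-a.e.-constant `f ∈ L²(X,μ)` is `μ`-mean sensitive. -/
theorem stmt3 {d : ℕ}
    [MeasurableSpace X] (μ : Measure X) [IsProbabilityMeasure μ]
    (T : (Fin d → ℤ) → X → X)
    (hT : ∀ j, MeasurePreserving (T j) μ μ)
    (hTadd : ∀ i j, T (i + j) = T i ∘ T j)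
    (herg : ∀ A : Set X, MeasurableSet A → (∀ j, T j ⁻¹' A = A) → μ A = 0 ∨ μ A = 1) :
    (∀ A : Set (X × X), MeasurableSet A →
        (∀ j, (fun p : X × X => (T j p.1, T j p.2)) ⁻¹' A = A) →
        (μ.prod μ) A = 0 ∨ (μ.prod μ) A = 1) ↔
      ∀ f : X → ℂ, MemLp f 2 μ → (¬ ∃ c : ℂ, f =ᵐ[μ] fun _ => c) →
        MeanSensitiveFun μ T f :=
  stmt3_general μ T hT hTadd
end
end

section
/- Let (X,Σ,μ,T) be a measure-preserving ℤ^d-system and let f : X → ℂ be a bounded measurable function with |f(x)| ≤ 1/2 for all x. Then for all x,y generic for |f|²: (a) d_f(x,y)² ≤ d'_f(x,y); (b) for every ε > 0, if ρ_f(x,y) < ε/2 then d'_f(x,y) < ε; and (c) for every ε > 0, if d_f(x,y)² < ε³ then ρ_f(x,y) < ε. Consequently the pseudometrics d_f, d'_f and ρ_f generate the same topology on the set of points generic for |f|². -/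
open MeasureTheory Filter Finset Metric
open scoped Classical

noncomputable section

variable {X : Type*}

/-- The pseudometric `d'_f(x,y) = limsup_n (1/|F_n|) Σ_{j∈F_n} |f(T^j x) − f(T^j y)|`. -/
def dF' {d : ℕ} (T : (Fin d → ℤ) → X → X) (f : X → ℂ) (x y : X) : ℝ :=
  Filter.limsup (fun n : ℕ =>
    (∑ j ∈ Fbox d n, ‖f (T j x) - f (T j y)‖) / ((Fbox d n).card : ℝ))
    Filter.atTop

/-- The pseudometric `ρ_f(x,y) = inf {ε > 0 : D̄({i : |f(T^i x) − f(T^i y)| > ε}) < ε}`. -/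
def rhoF {d : ℕ} (T : (Fin d → ℤ) → X → X) (f : X → ℂ) (x y : X) : ℝ :=
  sInf {ε : ℝ | 0 < ε ∧ upperDensity d {i | ε < ‖f (T i x) - f (T i y)‖} < ε}

/-!
Each of the three pseudometrics is an upper average along the boxes of the orbit distance
`g j = |f(T^j x) - f(T^j y)|`: of `g²` for `d_f²`, of `g` for `d'_f`, of the indicator of
`{g > δ}` for the densities that define `ρ_f`. When `0 ≤ g ≤ M`, three pointwise inequalities are
averaged: `g² ≤ M g`, `g ≤ δ + M · 1_{g > δ}` and `δ² · 1_{g > δ} ≤ g²`. They give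
`d_f² ≤ M d'_f`, `d'_f ≤ (1 + M) ρ_f` (let `δ` decrease to `ρ_f`) and `ρ_f³ ≤ d_f²` (let `δ`
increase to `ρ_f`, since `{g > δ}` has upper density at least `δ` for `δ < ρ_f`).
-/

section UpperMean

open scoped BigOperators

variable {ι κ : Type*} {l : Filter κ} {F : κ → Finset ι} {g h : ι → ℝ}

/-- The upper mean of `g` along the finite sets `F n`, i.e. the limit superior along `l` of the
averages of `g` over `F n`; the average over an empty `F n` is `0`. It is the common form of
`upperDensity`, `dF` and `dF'`. -/
def upperMean (l : Filter κ) (F : κ → Finset ι) (g : ι → ℝ) : ℝ :=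
  limsup (fun n => 𝔼 j ∈ F n, g j) l

lemma isBoundedUnder_le_expect (hg : BddAbove (Set.range g)) :
    l.IsBoundedUnder (· ≤ ·) fun n => 𝔼 j ∈ F n, g j := by
  obtain ⟨M, hM⟩ := hg
  refine isBoundedUnder_of ⟨max M 0, fun n => ?_⟩
  rcases (F n).eq_empty_or_nonempty with hF | hF
  · simp [hF]
  · exact expect_le hF fun i _ => (hM ⟨i, rfl⟩).trans (le_max_left M 0)

lemma isCoboundedUnder_le_expect [l.NeBot] (hg : BddBelow (Set.range g)) :
    l.IsCoboundedUnder (· ≤ ·) fun n => 𝔼 j ∈ F n, g j := by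
  obtain ⟨m, hm⟩ := hg
  refine (isBoundedUnder_of (r := (· ≥ ·)) ⟨min m 0, fun n => ?_⟩).isCoboundedUnder_flip
  rcases (F n).eq_empty_or_nonempty with hF | hF
  · simp [hF]
  · exact le_expect hF fun i _ => (min_le_left m 0).trans (hm ⟨i, rfl⟩)

lemma upperMean_mono [l.NeBot] (hg : BddBelow (Set.range g)) (hh : BddAbove (Set.range h))
    (hgh : g ≤ h) : upperMean l F g ≤ upperMean l F h :=
  limsup_le_limsup (.of_forall fun _ => expect_le_expect fun i _ => hgh i)
    (isCoboundedUnder_le_expect hg) (isBoundedUnder_le_expect hh)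

lemma upperMean_nonneg [l.NeBot] (hg : BddAbove (Set.range g)) (hg0 : 0 ≤ g) :
    0 ≤ upperMean l F g :=
  le_limsup_of_frequently_le (Frequently.of_forall fun _ => expect_nonneg fun i _ => hg0 i)
    (isBoundedUnder_le_expect hg)

lemma upperMean_const_mul [l.NeBot] (hga : BddAbove (Set.range g)) (hgb : BddBelow (Set.range g))
    {c : ℝ} (hc : 0 ≤ c) : upperMean l F (fun i => c * g i) = c * upperMean l F g := by
  simp only [upperMean, ← mul_expect]
  exact ((monotone_mul_left_of_nonneg hc).map_limsup_of_continuousAt _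
    (continuous_const_mul c).continuousAt (isBoundedUnder_le_expect hga)
    (isCoboundedUnder_le_expect hgb)).symm

lemma upperMean_const_add_le [l.NeBot] (hga : BddAbove (Set.range g))
    (hgb : BddBelow (Set.range g)) {c : ℝ} (hc : 0 ≤ c) :
    upperMean l F (fun i => c + g i) ≤ c + upperMean l F g := by
  have expect_const_add_le (n : κ) : 𝔼 i ∈ F n, (c + g i) ≤ c + 𝔼 i ∈ F n, g i := by
    rcases (F n).eq_empty_or_nonempty with hF | hF
    · simpa [hF] using hc
    · rw [expect_add_distrib, expect_const hF]
  have hc_add : BddBelow (Set.range fun i => c + g i) :=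
    hgb.range_mono _ fun i => le_add_of_nonneg_left hc
  calc upperMean l F (fun i => c + g i)
    _ ≤ limsup (fun n => c + 𝔼 i ∈ F n, g i) l :=
        limsup_le_limsup (.of_forall expect_const_add_le) (isCoboundedUnder_le_expect hc_add)
          (isBoundedUnder_le_add isBoundedUnder_const (isBoundedUnder_le_expect hga))
    _ = c + upperMean l F g :=
        limsup_const_add l _ c (isBoundedUnder_le_expect hga) (isCoboundedUnder_le_expect hgb)

lemma sqrt_upperMean [l.NeBot] (hga : BddAbove (Set.range g)) (hgb : BddBelow (Set.range g)) :
    √(upperMean l F g) = limsup (fun n => √(𝔼 j ∈ F n, g j)) l :=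
  Real.sqrt_monotone.map_limsup_of_continuousAt _ Real.continuous_sqrt.continuousAt
    (isBoundedUnder_le_expect hga) (isCoboundedUnder_le_expect hgb)

lemma bddAbove_range_indicator_one (S : Set ι) :
    BddAbove (Set.range (S.indicator (1 : ι → ℝ))) :=
  ⟨1, Set.forall_mem_range.2 <| Set.indicator_le_self' fun _ _ => zero_le_one⟩

lemma bddBelow_range_indicator_one (S : Set ι) :
    BddBelow (Set.range (S.indicator (1 : ι → ℝ))) :=
  ⟨0, Set.forall_mem_range.2 <| Set.indicator_nonneg fun _ _ => zero_le_one⟩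

lemma mul_upperMean_indicator_le [l.NeBot] (hga : BddAbove (Set.range g)) (hg0 : 0 ≤ g)
    {S : Set ι} {c : ℝ} (hc : 0 ≤ c) (hS : ∀ i ∈ S, c ≤ g i) :
    c * upperMean l F (S.indicator 1) ≤ upperMean l F g := by
  have c_mul_indicator_le (i : ι) : c * S.indicator 1 i ≤ g i := by
    by_cases hi : i ∈ S
    · simpa [hi] using hS i hi
    · simpa [hi] using hg0 i
  have hS_below := bddBelow_range_indicator_one S
  rw [← upperMean_const_mul (bddAbove_range_indicator_one S) hS_below hc]
  exact upperMean_mono (hS_below.range_comp_left (monotone_mul_left_of_nonneg hc)) hga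
    c_mul_indicator_le

lemma upperMean_le_add_mul_indicator [l.NeBot] (hgb : BddBelow (Set.range g)) {M : ℝ}
    (hM : 0 ≤ M) (hgM : ∀ i, g i ≤ M) {S : Set ι} {c : ℝ} (hc : 0 ≤ c) (hS : ∀ i ∉ S, g i ≤ c) :
    upperMean l F g ≤ c + M * upperMean l F (S.indicator 1) := by
  have le_add_indicator (i : ι) : g i ≤ c + M * S.indicator 1 i := by
    by_cases hi : i ∈ S
    · simpa [hi] using (hgM i).trans (le_add_of_nonneg_left hc)
    · simpa [hi] using hS i hi
  have hS_above := bddAbove_range_indicator_one S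
  have hS_below := bddBelow_range_indicator_one S
  have hMS_above := hS_above.range_comp_left (monotone_mul_left_of_nonneg hM)
  have hMS_below := hS_below.range_comp_left (monotone_mul_left_of_nonneg hM)
  calc upperMean l F g
    _ ≤ upperMean l F (fun i => c + M * S.indicator 1 i) :=
        upperMean_mono hgb (hMS_above.range_comp_left (add_right_mono (a := c))) le_add_indicator
    _ ≤ c + upperMean l F (fun i => M * S.indicator 1 i) :=
        upperMean_const_add_le hMS_above hMS_below hc
    _ = c + M * upperMean l F (S.indicator 1) := by
        rw [upperMean_const_mul hS_above hS_below hM]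

end UpperMean

section OrbitDist

open scoped Topology

variable {d : ℕ} {T : (Fin d → ℤ) → X → X} {f : X → ℂ} {x y : X} {M : ℝ}

/-- The distance `|f(T^j x) - f(T^j y)|` between the observations of `f` along two orbits, as a
function of the time `j`; `d_f`, `d'_f` and `ρ_f` depend on `x` and `y` only through it. -/
def orbitDist (T : (Fin d → ℤ) → X → X) (f : X → ℂ) (x y : X) (j : Fin d → ℤ) : ℝ :=
  ‖f (T j x) - f (T j y)‖

lemma orbitDist_nonneg (j : Fin d → ℤ) : 0 ≤ orbitDist T f x y j :=
  norm_nonneg _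

lemma upperDensity_eq_upperMean (S : Set (Fin d → ℤ)) :
    upperDensity d S = upperMean atTop (Fbox d) (S.indicator 1) := by
  simp [upperDensity, upperMean, expect_eq_sum_div_card, Set.indicator_apply]

lemma dF'_eq_upperMean : dF' T f x y = upperMean atTop (Fbox d) (orbitDist T f x y) := by
  simp only [dF', upperMean, expect_eq_sum_div_card, orbitDist]

lemma bddBelow_range_orbitDist : BddBelow (Set.range (orbitDist T f x y)) :=
  ⟨0, Set.forall_mem_range.2 orbitDist_nonneg⟩

lemma bddBelow_range_orbitDist_sq : BddBelow (Set.range fun j => orbitDist T f x y j ^ 2) :=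
  ⟨0, Set.forall_mem_range.2 fun _ => sq_nonneg _⟩

lemma bddAbove_range_orbitDist_sq (h : BddAbove (Set.range (orbitDist T f x y))) :
    BddAbove (Set.range fun j => orbitDist T f x y j ^ 2) := by
  obtain ⟨M, hM⟩ := h
  exact ⟨M ^ 2, Set.forall_mem_range.2 fun j =>
    pow_le_pow_left₀ (orbitDist_nonneg j) (hM ⟨j, rfl⟩) 2⟩

lemma dF_sq_eq_upperMean (h : BddAbove (Set.range (orbitDist T f x y))) :
    dF T f x y ^ 2 = upperMean atTop (Fbox d) fun j => orbitDist T f x y j ^ 2 := by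
  have dF_eq_sqrt : dF T f x y = √(upperMean atTop (Fbox d) fun j => orbitDist T f x y j ^ 2) := by
    rw [sqrt_upperMean (bddAbove_range_orbitDist_sq h) bddBelow_range_orbitDist_sq]
    simp only [dF, expect_eq_sum_div_card, orbitDist]
  rw [dF_eq_sqrt, Real.sq_sqrt]
  exact upperMean_nonneg (bddAbove_range_orbitDist_sq h) fun _ => sq_nonneg _

lemma dF_sq_le_mul_dF' (hM : ∀ j, orbitDist T f x y j ≤ M) :
    dF T f x y ^ 2 ≤ M * dF' T f x y := by
  have hM0 : 0 ≤ M := (orbitDist_nonneg 0).trans (hM 0)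
  have bdd : BddAbove (Set.range (orbitDist T f x y)) := ⟨M, Set.forall_mem_range.2 hM⟩
  rw [dF_sq_eq_upperMean bdd, dF'_eq_upperMean,
    ← upperMean_const_mul bdd bddBelow_range_orbitDist hM0]
  refine upperMean_mono bddBelow_range_orbitDist_sq ?_ fun j => ?_
  · exact bdd.range_comp_left (monotone_mul_left_of_nonneg hM0)
  · rw [sq]
    exact mul_le_mul_of_nonneg_right (hM j) (orbitDist_nonneg j)

lemma dF'_le_add_mul_upperDensity (hM : ∀ j, orbitDist T f x y j ≤ M) {δ : ℝ} (hδ : 0 ≤ δ) :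
    dF' T f x y ≤ δ + M * upperDensity d {j | δ < orbitDist T f x y j} := by
  rw [dF'_eq_upperMean, upperDensity_eq_upperMean]
  exact upperMean_le_add_mul_indicator bddBelow_range_orbitDist
    ((orbitDist_nonneg 0).trans (hM 0)) hM hδ fun j hj => not_lt.1 hj

lemma sq_mul_upperDensity_le_dF_sq (h : BddAbove (Set.range (orbitDist T f x y))) {δ : ℝ}
    (hδ : 0 ≤ δ) :
    δ ^ 2 * upperDensity d {j | δ < orbitDist T f x y j} ≤ dF T f x y ^ 2 := by
  rw [upperDensity_eq_upperMean, dF_sq_eq_upperMean h]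
  exact mul_upperMean_indicator_le (bddAbove_range_orbitDist_sq h) (fun _ => sq_nonneg _)
    (sq_nonneg δ) fun j hj => pow_le_pow_left₀ hδ (le_of_lt hj) 2

lemma rhoF_nonneg : 0 ≤ rhoF T f x y :=
  Real.sInf_nonneg fun _ hε => hε.1.le

lemma le_upperDensity_of_lt_rhoF {δ : ℝ} (hδ : 0 < δ) (h : δ < rhoF T f x y) :
    δ ≤ upperDensity d {j | δ < orbitDist T f x y j} :=
  not_lt.1 fun hlt => notMem_of_lt_csInf h ⟨0, fun _ hε => hε.1.le⟩ ⟨hδ, hlt⟩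

lemma rhoF_set_nonempty (hM : ∀ j, orbitDist T f x y j ≤ M) :
    {ε : ℝ | 0 < ε ∧ upperDensity d {j | ε < orbitDist T f x y j} < ε}.Nonempty := by
  have hM_add_one : 0 < M + 1 :=
    add_pos_of_nonneg_of_pos ((orbitDist_nonneg 0).trans (hM 0)) one_pos
  have exceedance_empty : {j | M + 1 < orbitDist T f x y j} = ∅ :=
    Set.eq_empty_of_forall_notMem fun j => not_lt.2 ((hM j).trans (lt_add_one M).le)
  refine ⟨M + 1, hM_add_one, ?_⟩
  rw [exceedance_empty]
  simpa [upperDensity] using hM_add_one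

lemma dF'_le_mul_rhoF (hM : ∀ j, orbitDist T f x y j ≤ M) :
    dF' T f x y ≤ (1 + M) * rhoF T f x y := by
  have hM0 : 0 ≤ M := (orbitDist_nonneg 0).trans (hM 0)
  rw [← div_le_iff₀' (by positivity)]
  refine le_csInf (rhoF_set_nonempty hM) fun δ ⟨hδ, hdensity⟩ => ?_
  rw [div_le_iff₀' (by positivity)]
  calc dF' T f x y
    _ ≤ δ + M * upperDensity d {j | δ < orbitDist T f x y j} :=
        dF'_le_add_mul_upperDensity hM hδ.le
    _ ≤ δ + M * δ := by gcongr; exact hdensity.le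
    _ = (1 + M) * δ := by ring

lemma rhoF_pow_three_le_dF_sq (h : BddAbove (Set.range (orbitDist T f x y))) :
    rhoF T f x y ^ 3 ≤ dF T f x y ^ 2 := by
  rcases (rhoF_nonneg : 0 ≤ rhoF T f x y).eq_or_lt with hρ | hρ
  · simpa [← hρ] using sq_nonneg (dF T f x y)
  have pow_three_le : ∀ δ ∈ Set.Ioo 0 (rhoF T f x y), δ ^ 3 ≤ dF T f x y ^ 2 := by
    rintro δ ⟨hδ, hδρ⟩
    calc δ ^ 3
      _ = δ ^ 2 * δ := by ring
      _ ≤ δ ^ 2 * upperDensity d {j | δ < orbitDist T f x y j} := by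
          gcongr
          exact le_upperDensity_of_lt_rhoF hδ hδρ
      _ ≤ dF T f x y ^ 2 := sq_mul_upperDensity_le_dF_sq h hδ.le
  have tendsto_pow_three :
      Tendsto (fun δ : ℝ => δ ^ 3) (𝓝[<] rhoF T f x y) (𝓝 (rhoF T f x y ^ 3)) :=
    (continuous_pow 3).continuousWithinAt
  exact le_of_tendsto tendsto_pow_three (mem_of_superset (Ioo_mem_nhdsLT hρ) pow_three_le)

end OrbitDist

theorem stmt6_general {d : ℕ} (T : (Fin d → ℤ) → X → X) (f : X → ℂ) (x y : X) {M : ℝ}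
    (hM : ∀ j, ‖f (T j x) - f (T j y)‖ ≤ M) :
    dF T f x y ^ 2 ≤ M * dF' T f x y ∧
    dF' T f x y ≤ (1 + M) * rhoF T f x y ∧
    rhoF T f x y ^ 3 ≤ dF T f x y ^ 2 :=
  ⟨dF_sq_le_mul_dF' hM, dF'_le_mul_rhoF hM,
    rhoF_pow_three_le_dF_sq ⟨M, Set.forall_mem_range.2 hM⟩⟩

/-- for a bounded measurable `f` with `|f| ≤ 1/2` and `x, y` generic for `|f|²`:
(a) `d_f(x,y)² ≤ d'_f(x,y)`; (b) `ρ_f(x,y) < ε/2 → d'_f(x,y) < ε`;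
(c) `d_f(x,y)² < ε³ → ρ_f(x,y) < ε`. -/
theorem stmt6 {d : ℕ}
    [MeasurableSpace X] (μ : Measure X) [IsProbabilityMeasure μ]
    (T : (Fin d → ℤ) → X → X)
    (hT : ∀ j, MeasurePreserving (T j) μ μ)
    (hTadd : ∀ i j, T (i + j) = T i ∘ T j)
    (f : X → ℂ) (hf : Measurable f) (hbd : ∀ x, ‖f x‖ ≤ 1 / 2)
    (x y : X) (hx : genericSq μ T f x) (hy : genericSq μ T f y) :
    (dF T f x y) ^ 2 ≤ dF' T f x y ∧
    (∀ ε : ℝ, 0 < ε → (rhoF T f x y < ε / 2 → dF' T f x y < ε)) ∧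
    (∀ ε : ℝ, 0 < ε → ((dF T f x y) ^ 2 < ε ^ 3 → rhoF T f x y < ε)) := by
  have hM (j : Fin d → ℤ) : ‖f (T j x) - f (T j y)‖ ≤ 1 :=
    (norm_sub_le_of_le (hbd _) (hbd _)).trans_eq (add_halves 1)
  obtain ⟨ha, hb, hc⟩ := stmt6_general T f x y hM
  exact ⟨by linarith, fun ε _ h => by linarith,
    fun ε hε h => lt_of_pow_lt_pow_left₀ 3 hε.le (hc.trans_lt h)⟩
end
end

section
/- Let (X,T) be a uniquely ergodic topological dynamical system given by a continuous ℕ^d-action on a compact metric space and let f ∈ C(X). If f is weakly almost periodic (the orbit {f∘T^j : j ∈ ℕ^d} is precompact in C(X) with respect to the weak topology), then f is mean equicontinuous. -/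
open MeasureTheory Filter Finset Metric
open scoped Classical

noncomputable section

/-- The box `{0,…,n−1}^d` inside `ℕ^d`. -/
def FboxN (d n : ℕ) : Finset (Fin d → ℕ) :=
  Fintype.piFinset fun _ => Finset.range n

variable {X : Type*}

/-- The pseudometric `d_f` for an `ℕ^d`-action. -/
def dFN {d : ℕ} (T : (Fin d → ℕ) → X → X) (f : X → ℂ) (x y : X) : ℝ :=
  Filter.limsup (fun n : ℕ =>
    Real.sqrt ((∑ j ∈ FboxN d n, ‖f (T j x) - f (T j y)‖ ^ 2) / ((FboxN d n).card : ℝ)))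
    Filter.atTop

/-!
Put `F (x, y) = |f x - f y|²` and let the action move both coordinates of `X × X`. The weak
orbit closure `K` of `f` is compact and metrizable, so the empirical measures of the orbit of `f`
converge along a subsequence to a measure on `K`. Along it the averages of `F` over the orbit of
`(x, y)` tend to `g (x, y) = ∫ |h x - h y|² dμ(h)`, which is continuous by dominated convergence.

The limit does not depend on the subsequence: a measure `ν` on `X × X` with respect to which the
orbit of `(x, y)` is equidistributed along some subsequence is invariant, so `∫ F dν = ∫ g dν`, and
this is `g (x, y)` because `g` is invariant. Hence `d_f = √g` is continuous, and it vanishes on the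
diagonal.
-/

open scoped BigOperators Topology

section Averages

variable {G : Type*}

theorem abs_expect_sub_expect_le [DecidableEq G] {s t : Finset G} (hst : #s = #t) {a : G → ℝ}
    {M : ℝ} (ha : ∀ j, |a j| ≤ M) :
    |𝔼 j ∈ s, a j - 𝔼 j ∈ t, a j| ≤ 2 * M * (#(s \ t) / #s) := by
  have abs_sum_le (u : Finset G) : |∑ j ∈ u, a j| ≤ #u * M :=
    (abs_sum_le_sum_abs _ _).trans <|
      (sum_le_card_nsmul _ _ M fun j _ => ha j).trans_eq (nsmul_eq_mul _ _)
  have hsum : |∑ j ∈ s, a j - ∑ j ∈ t, a j| ≤ 2 * M * #(s \ t) := by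
    rw [← sum_sdiff_sub_sum_sdiff]
    have hs := abs_sum_le (s \ t)
    have ht := abs_sum_le (t \ s)
    rw [← card_sdiff_comm hst] at ht
    linarith [abs_sub (∑ j ∈ s \ t, a j) (∑ j ∈ t \ s, a j)]
  rw [expect_eq_sum_div_card, expect_eq_sum_div_card, ← hst, ← sub_div, abs_div, Nat.abs_cast,
    ← mul_div_assoc]
  gcongr

/-- Right Følner sequences of finite sets, in the form `|B n ∩ (B n + i)| / |B n| → 1`. Mathlib's
`IsAddFoelner` needs a group action, which excludes `ℕ^d`. As `0 / 0 = 0`, the sets `B n` are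
eventually nonempty. -/
def IsFoelnerSeq [DecidableEq G] [Add G] [IsRightCancelAdd G] (B : ℕ → Finset G) : Prop :=
  ∀ i, Tendsto (fun n => (#(B n ∩ (B n).map (addRightEmbedding i)) / #(B n) : ℝ)) atTop (𝓝 1)

namespace IsFoelnerSeq

variable [DecidableEq G] [Add G] [IsRightCancelAdd G] {B : ℕ → Finset G}

theorem comp_tendsto (hB : IsFoelnerSeq B)
    {φ : ℕ → ℕ} (hφ : Tendsto φ atTop atTop) : IsFoelnerSeq (B ∘ φ) :=
  fun i => (hB i).comp hφ

theorem eventually_nonempty [Nonempty G] (hB : IsFoelnerSeq B) :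
    ∀ᶠ n in atTop, (B n).Nonempty := by
  filter_upwards [(hB (Classical.arbitrary G)).eventually_ne one_ne_zero] with n hn
  contrapose! hn
  simp [hn]

theorem tendsto_expect_add_sub_expect (hB : IsFoelnerSeq B) {a : G → ℝ} {M : ℝ}
    (ha : ∀ j, |a j| ≤ M) (i : G) :
    Tendsto (fun n => 𝔼 j ∈ B n, a (j + i) - 𝔼 j ∈ B n, a j) atTop (𝓝 0) := by
  have : Nonempty G := ⟨i⟩
  have hbound : Tendsto (fun n => 2 * M * (1 - #(B n ∩ (B n).map (addRightEmbedding i)) / #(B n)))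
      atTop (𝓝 0) := by
    simpa using ((hB i).const_sub 1).const_mul (2 * M)
  refine squeeze_zero_norm' ?_ hbound
  filter_upwards [hB.eventually_nonempty] with n hn
  have hcard : (#(B n) : ℝ) ≠ 0 := mod_cast hn.card_ne_zero
  have hshift : 𝔼 j ∈ (B n).map (addRightEmbedding i), a j = 𝔼 j ∈ B n, a (j + i) := by
    simp [expect_eq_sum_div_card]
  rw [Real.norm_eq_abs, abs_sub_comm, ← hshift]
  refine (abs_expect_sub_expect_le (card_map _).symm ha).trans_eq ?_
  rw [← card_inter_add_card_sdiff (B n) ((B n).map (addRightEmbedding i))] at hcard ⊢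
  push_cast at hcard ⊢
  rw [one_sub_div hcard, add_sub_cancel_left]

theorem piFinset {ι : Type*} [Fintype ι] [DecidableEq ι] {G : ι → Type*}
    [∀ k, DecidableEq (G k)] [∀ k, Add (G k)] [∀ k, IsRightCancelAdd (G k)]
    {B : ∀ k, ℕ → Finset (G k)} (hB : ∀ k, IsFoelnerSeq (B k)) :
    IsFoelnerSeq fun n => Fintype.piFinset fun k => B k n := by
  intro i
  have hinter (n : ℕ) : (Fintype.piFinset fun k => B k n) ∩
      (Fintype.piFinset fun k => B k n).map (addRightEmbedding i) =
        Fintype.piFinset fun k => B k n ∩ (B k n).map (addRightEmbedding (i k)) := by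
    ext j
    simp only [mem_inter, Fintype.mem_piFinset, Finset.mem_map, addRightEmbedding_apply,
      forall_and, funext_iff, Pi.add_apply, Classical.skolem]
  simp only [hinter, Fintype.card_piFinset, Nat.cast_prod, ← prod_div_distrib]
  simpa using tendsto_finsetProd univ fun k _ => hB k (i k)

theorem range : IsFoelnerSeq Finset.range := by
  intro i
  have hinter (n : ℕ) :
      Finset.range n ∩ (Finset.range n).map (addRightEmbedding i) = Ico i n := by
    ext j
    simp only [mem_inter, Finset.mem_map, mem_range, mem_Ico, addRightEmbedding_apply]
    exact ⟨by rintro ⟨hj, m, -, rfl⟩; omega, fun hj => ⟨hj.2, j - i, by omega, by omega⟩⟩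
  simp only [hinter, Nat.card_Ico, card_range]
  have hlim : Tendsto (fun n : ℕ => 1 - (i : ℝ) / n) atTop (𝓝 1) := by
    simpa using (tendsto_const_div_atTop_nhds_zero_nat (i : ℝ)).const_sub 1
  refine hlim.congr' ?_
  filter_upwards [eventually_ge_atTop i, eventually_ne_atTop 0] with n hin hn
  rw [Nat.cast_sub hin, sub_div, div_self (Nat.cast_ne_zero.2 hn)]

end IsFoelnerSeq

theorem isFoelnerSeq_FboxN (d : ℕ) : IsFoelnerSeq (FboxN d) :=
  IsFoelnerSeq.piFinset fun _ => IsFoelnerSeq.range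

end Averages

section EmpiricalMeasures

variable {G Z : Type*} [MeasurableSpace Z]

theorem integral_expect {μ : Measure Z} {s : Finset G} {a : G → Z → ℝ}
    (ha : ∀ j ∈ s, Integrable (a j) μ) :
    ∫ w, 𝔼 j ∈ s, a j w ∂μ = 𝔼 j ∈ s, ∫ w, a j w ∂μ := by
  simp only [expect_eq_sum_div_card, integral_div, integral_finsetSum s ha]

theorem exists_probabilityMeasure_integral_eq_expect {s : Finset G} (hs : s.Nonempty)
    [MeasurableSingletonClass Z] (z : G → Z) :
    ∃ μ : ProbabilityMeasure Z, ∀ a : Z → ℝ, ∫ w, a w ∂(μ : Measure Z) = 𝔼 j ∈ s, a (z j) := by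
  have hcard : (#s : ENNReal) ≠ 0 := mod_cast hs.card_ne_zero
  refine ⟨⟨(#s : ENNReal)⁻¹ • ∑ j ∈ s, Measure.dirac (z j), ⟨?_⟩⟩, fun a => ?_⟩
  · simp [ENNReal.inv_mul_cancel hcard]
  · rw [ProbabilityMeasure.coe_mk, integral_smul_measure,
      integral_finsetSum_measure fun j _ => integrable_dirac (by simp), expect_eq_sum_div_card,
      div_eq_inv_mul]
    simp

variable [TopologicalSpace Z]

/-- The points `z j` are equidistributed with respect to `μ` along the finite sets `B n`: their
empirical measures converge weakly to `μ`. -/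
def IsEquidistributed (B : ℕ → Finset G) (z : G → Z) (μ : Measure Z) : Prop :=
  ∀ F : C(Z, ℝ), Tendsto (fun n => 𝔼 j ∈ B n, F (z j)) atTop (𝓝 (∫ w, F w ∂μ))

theorem IsEquidistributed.integral_eq_of_forall_eq {B : ℕ → Finset G} {z : G → Z} {μ : Measure Z}
    (hμ : IsEquidistributed B z μ) (hB : ∀ᶠ n in atTop, (B n).Nonempty) {F : C(Z, ℝ)} {c : ℝ}
    (hF : ∀ j, F (z j) = c) : ∫ w, F w ∂μ = c := by
  refine tendsto_nhds_unique (hμ F) (tendsto_const_nhds.congr' ?_)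
  filter_upwards [hB] with n hn
  simp [hF, expect_const hn]

variable [CompactSpace Z] [BorelSpace Z]

theorem integrable_continuousMap (μ : Measure Z) [IsFiniteMeasure μ] (F : C(Z, ℝ)) :
    Integrable F μ :=
  F.continuous.integrable_of_hasCompactSupport (.of_compactSpace F)

theorem integral_eq_of_tendsto_expect {μ : Measure Z} [IsFiniteMeasure μ] {B : ℕ → Finset G}
    (hB : ∀ᶠ n in atTop, (B n).Nonempty) {a : G → C(Z, ℝ)} {M c : ℝ} (ha : ∀ j w, |a j w| ≤ M)
    (hc : ∀ j, ∫ w, a j w ∂μ = c) {g : Z → ℝ}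
    (hg : ∀ w, Tendsto (fun n => 𝔼 j ∈ B n, a j w) atTop (𝓝 (g w))) :
    ∫ w, g w ∂μ = c := by
  have hlim : Tendsto (fun n => ∫ w, 𝔼 j ∈ B n, a j w ∂μ) atTop (𝓝 (∫ w, g w ∂μ)) := by
    refine tendsto_integral_filter_of_dominated_convergence (fun _ => M) ?_ ?_
      (integrable_const _) (.of_forall hg)
    · refine .of_forall fun n => Continuous.aestronglyMeasurable ?_
      simp only [expect_eq_sum_div_card]
      fun_prop
    · filter_upwards [hB] with n hn
      exact .of_forall fun w => (abs_expect_le _ _).trans (expect_le hn fun j _ => ha j w)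
  refine tendsto_nhds_unique hlim (tendsto_const_nhds.congr' ?_)
  filter_upwards [hB] with n hn
  simp only [integral_expect fun j _ => integrable_continuousMap μ (a j), hc, expect_const hn]

theorem exists_strictMono_isEquidistributed [TopologicalSpace.MetrizableSpace Z]
    {B : ℕ → Finset G} (hB : ∀ᶠ n in atTop, (B n).Nonempty) (z : G → Z) :
    ∃ (μ : ProbabilityMeasure Z) (φ : ℕ → ℕ), StrictMono φ ∧ IsEquidistributed (B ∘ φ) z μ := by
  obtain ⟨P, hP⟩ := (hB.mono fun n hn =>
    exists_probabilityMeasure_integral_eq_expect hn z).choice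
  obtain ⟨μ, φ, hφ, hlim⟩ := CompactSpace.tendsto_subseq P
  refine ⟨μ, φ, hφ, fun F => ?_⟩
  have hint := ProbabilityMeasure.tendsto_iff_forall_integral_tendsto.1 hlim (.mkOfCompact F)
  refine hint.congr' ?_
  filter_upwards [hφ.tendsto_atTop.eventually hP] with k hk
  exact hk F

end EmpiricalMeasures

section ErgodicAverages

variable {G Y : Type*} [DecidableEq G] [AddCommSemigroup G] [IsRightCancelAdd G]
  [TopologicalSpace Y] [CompactSpace Y] {B : ℕ → Finset G} {S : G → C(Y, Y)} {F : C(Y, ℝ)}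

theorem apply_eq_of_tendsto_expect (hB : IsFoelnerSeq B)
    (hS : ∀ i j, S (i + j) = (S i).comp (S j)) {g : Y → ℝ}
    (hg : ∀ y, Tendsto (fun n => 𝔼 j ∈ B n, F (S j y)) atTop (𝓝 (g y))) (i : G) (y : Y) :
    g (S i y) = g y := by
  have hshift := hB.tendsto_expect_add_sub_expect (a := fun j => F (S j y))
    (fun j => F.norm_coe_le_norm _) i
  simp only [hS, ContinuousMap.comp_apply] at hshift
  exact sub_eq_zero.1 (tendsto_nhds_unique ((hg (S i y)).sub (hg y)) hshift)

variable [MeasurableSpace Y]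

theorem IsEquidistributed.integral_comp (hB : IsFoelnerSeq B)
    (hS : ∀ i j, S (i + j) = (S i).comp (S j)) {y : Y} {ν : Measure Y}
    (hν : IsEquidistributed B (fun j => S j y) ν) (i : G) :
    ∫ w, F (S i w) ∂ν = ∫ w, F w ∂ν := by
  have hshift := hB.tendsto_expect_add_sub_expect (a := fun j => F (S j y))
    (fun j => F.norm_coe_le_norm _) i
  simp only [add_comm _ i, hS, ContinuousMap.comp_apply] at hshift
  exact sub_eq_zero.1 (tendsto_nhds_unique ((hν (F.comp (S i))).sub (hν F)) hshift)

variable [BorelSpace Y]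

theorem tendsto_expect_of_tendsto_expect_subseq [Nonempty G]
    [TopologicalSpace.MetrizableSpace Y] (hB : IsFoelnerSeq B)
    (hS : ∀ i j, S (i + j) = (S i).comp (S j)) {φ : ℕ → ℕ} (hφ : Tendsto φ atTop atTop)
    {g : C(Y, ℝ)} (hg : ∀ y, Tendsto (fun n => 𝔼 j ∈ B (φ n), F (S j y)) atTop (𝓝 (g y)))
    (y : Y) : Tendsto (fun n => 𝔼 j ∈ B n, F (S j y)) atTop (𝓝 (g y)) := by
  have hBφ := hB.comp_tendsto hφ
  refine tendsto_of_subseq_tendsto fun ψ hψ => ?_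
  have hBψ := hB.comp_tendsto hψ
  obtain ⟨ν, χ, hχ, hν⟩ :=
    exists_strictMono_isEquidistributed hBψ.eventually_nonempty fun j => S j y
  have hBχ := hBψ.comp_tendsto hχ.tendsto_atTop
  have hgF : ∫ w, g w ∂(ν : Measure Y) = ∫ w, F w ∂(ν : Measure Y) :=
    integral_eq_of_tendsto_expect hBφ.eventually_nonempty (a := fun j => F.comp (S j))
      (fun j w => F.norm_coe_le_norm _) (hν.integral_comp hBχ hS) hg
  have hgy : ∫ w, g w ∂(ν : Measure Y) = g y :=
    hν.integral_eq_of_forall_eq hBχ.eventually_nonempty fun i =>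
      apply_eq_of_tendsto_expect hBφ hS hg i y
  exact ⟨χ, hgy ▸ hgF ▸ hν F⟩

end ErgodicAverages

section WeaklyCompact

theorem exists_strictMono_tendsto_expect_apply {G K Y : Type*} [TopologicalSpace K]
    [CompactSpace K] [TopologicalSpace.MetrizableSpace K] [TopologicalSpace Y]
    [FirstCountableTopology Y] {Φ : K → C(Y, ℝ)} (hΦ : ∀ y, Continuous fun h => Φ h y) {C : ℝ}
    (hC : ∀ h y, |Φ h y| ≤ C) {B : ℕ → Finset G} (hB : ∀ᶠ n in atTop, (B n).Nonempty)
    (z : G → K) :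
    ∃ (g : C(Y, ℝ)) (φ : ℕ → ℕ), StrictMono φ ∧
      ∀ y, Tendsto (fun n => 𝔼 j ∈ B (φ n), Φ (z j) y) atTop (𝓝 (g y)) := by
  borelize K
  obtain ⟨μ, φ, hφ, hμ⟩ := exists_strictMono_isEquidistributed hB z
  have hcont : Continuous fun y => ∫ h, Φ h y ∂(μ : Measure K) :=
    continuous_of_dominated
      (fun y => (integrable_continuousMap (μ : Measure K) ⟨_, hΦ y⟩).aestronglyMeasurable)
      (fun y => .of_forall fun h => hC h y) (integrable_const C)
      (.of_forall fun h => (Φ h).continuous)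
  exact ⟨⟨_, hcont⟩, φ, hφ, fun y => hμ ⟨_, hΦ y⟩⟩

variable {𝕜 : Type*} [RCLike 𝕜] [TopologicalSpace X]

theorem continuous_toWeakSpace_symm_apply (x : X) :
    Continuous fun h : WeakSpace 𝕜 C(X, 𝕜) => (toWeakSpace 𝕜 C(X, 𝕜)).symm h x :=
  WeakBilin.eval_continuous (topDualPairing 𝕜 C(X, 𝕜)).flip (ContinuousMap.evalCLM 𝕜 x)

theorem norm_toWeakSpace_symm_apply_le_of_mem_closure {A : Set (WeakSpace 𝕜 C(X, 𝕜))} {x : X}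
    {C : ℝ} (hA : ∀ h ∈ A, ‖(toWeakSpace 𝕜 C(X, 𝕜)).symm h x‖ ≤ C) {h : WeakSpace 𝕜 C(X, 𝕜)}
    (hh : h ∈ closure A) : ‖(toWeakSpace 𝕜 C(X, 𝕜)).symm h x‖ ≤ C :=
  closure_minimal hA
    (isClosed_le (continuous_toWeakSpace_symm_apply x).norm continuous_const) hh

theorem metrizableSpace_of_isCompact_weakSpace [TopologicalSpace.SeparableSpace X]
    {K : Set (WeakSpace 𝕜 C(X, 𝕜))} (hK : IsCompact K) :
    TopologicalSpace.MetrizableSpace K := by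
  have : CompactSpace K := isCompact_iff_compactSpace.1 hK
  obtain ⟨D, hDcount, hDdense⟩ := TopologicalSpace.exists_countable_dense X
  have := hDcount.toEncodable
  refine Metric.PiNatEmbed.TopologicalSpace.MetrizableSpace.of_countable_separating
    (fun (x : D) (h : K) => (toWeakSpace 𝕜 C(X, 𝕜)).symm h x)
    (fun x => (continuous_toWeakSpace_symm_apply (x : X)).comp continuous_subtype_val)
    fun h₁ h₂ hne => ?_
  contrapose! hne
  refine Subtype.ext ((toWeakSpace 𝕜 C(X, 𝕜)).symm.injective (ContinuousMap.coe_injective ?_))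
  exact Continuous.ext_on hDdense (map_continuous _) (map_continuous _) fun x hx => hne ⟨x, hx⟩

end WeaklyCompact

section MeanEquicontinuity

variable {G 𝕜 : Type*} [RCLike 𝕜] [TopologicalSpace X]

/-- Weak almost periodicity of `f` under the maps `T j`: the orbit `{f ∘ T j}` is relatively
compact in the weak topology of `C(X, 𝕜)`. -/
def IsWeaklyAlmostPeriodic (T : G → C(X, X)) (f : C(X, 𝕜)) : Prop :=
  IsCompact (closure (Set.range fun j => toWeakSpace 𝕜 C(X, 𝕜) (f.comp (T j))))

/-- The pseudometric `d_f` along the finite sets `B n`, which generalises `dFN` from the boxes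
`FboxN d n`. -/
def meanPseudodist (B : ℕ → Finset G) (T : G → C(X, X)) (f : C(X, 𝕜)) (x y : X) : ℝ :=
  limsup (fun n => √(𝔼 j ∈ B n, ‖f (T j x) - f (T j y)‖ ^ 2)) atTop

theorem meanPseudodist_self (B : ℕ → Finset G) (T : G → C(X, X)) (f : C(X, 𝕜)) (x : X) :
    meanPseudodist B T f x x = 0 := by
  simp [meanPseudodist]

theorem dFN_eq_meanPseudodist {d : ℕ} (T : (Fin d → ℕ) → C(X, X)) (f : C(X, ℂ)) :
    dFN (fun j => T j) f = meanPseudodist (FboxN d) T f := by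
  ext x y
  simp only [dFN, meanPseudodist, expect_eq_sum_div_card]

variable [CompactSpace X] [TopologicalSpace.MetrizableSpace X] {B : ℕ → Finset G}
  {T : G → C(X, X)} {f : C(X, 𝕜)}

theorem IsWeaklyAlmostPeriodic.exists_strictMono_tendsto_expect (hf : IsWeaklyAlmostPeriodic T f)
    (hB : ∀ᶠ n in atTop, (B n).Nonempty) :
    ∃ (g : C(X × X, ℝ)) (φ : ℕ → ℕ), StrictMono φ ∧ ∀ p : X × X,
      Tendsto (fun n => 𝔼 j ∈ B (φ n), ‖f (T j p.1) - f (T j p.2)‖ ^ 2) atTop (𝓝 (g p)) := by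
  let K := closure (Set.range fun j => toWeakSpace 𝕜 C(X, 𝕜) (f.comp (T j)))
  have : CompactSpace K := isCompact_iff_compactSpace.1 hf
  have : TopologicalSpace.MetrizableSpace K := metrizableSpace_of_isCompact_weakSpace hf
  let ev (h : K) : C(X, 𝕜) := (toWeakSpace 𝕜 C(X, 𝕜)).symm h
  have hev (x : X) : Continuous fun h => ev h x :=
    (continuous_toWeakSpace_symm_apply x).comp continuous_subtype_val
  have hnorm (h : K) (x : X) : ‖ev h x‖ ≤ ‖f‖ :=
    norm_toWeakSpace_symm_apply_le_of_mem_closure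
      (Set.forall_mem_range.2 fun j => f.norm_coe_le_norm (T j x)) h.2
  let Φ (h : K) : C(X × X, ℝ) := ⟨fun p => ‖ev h p.1 - ev h p.2‖ ^ 2, by fun_prop⟩
  have hΦ (p : X × X) : Continuous fun h => Φ h p := ((hev p.1).sub (hev p.2)).norm.pow 2
  have hΦ_le (h : K) (p : X × X) : |Φ h p| ≤ (‖f‖ + ‖f‖) ^ 2 := by
    rw [abs_of_nonneg (sq_nonneg _)]
    exact pow_le_pow_left₀ (norm_nonneg _) (norm_sub_le_of_le (hnorm h _) (hnorm h _)) 2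
  exact exists_strictMono_tendsto_expect_apply hΦ hΦ_le hB
    fun j => ⟨toWeakSpace 𝕜 C(X, 𝕜) (f.comp (T j)), subset_closure ⟨j, rfl⟩⟩

variable [DecidableEq G] [AddCommSemigroup G] [IsRightCancelAdd G] [Nonempty G]

theorem IsWeaklyAlmostPeriodic.exists_tendsto_expect (hf : IsWeaklyAlmostPeriodic T f)
    (hB : IsFoelnerSeq B) (hT : ∀ i j, T (i + j) = (T i).comp (T j)) :
    ∃ g : C(X × X, ℝ), ∀ p : X × X,
      Tendsto (fun n => 𝔼 j ∈ B n, ‖f (T j p.1) - f (T j p.2)‖ ^ 2) atTop (𝓝 (g p)) := by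
  borelize X
  obtain ⟨g, φ, hφ, hg⟩ := hf.exists_strictMono_tendsto_expect hB.eventually_nonempty
  let S (j : G) : C(X × X, X × X) := (T j).prodMap (T j)
  have hS (i j : G) : S (i + j) = (S i).comp (S j) := by
    simp only [S, hT]
    rfl
  let F : C(X × X, ℝ) := ⟨fun p => ‖f p.1 - f p.2‖ ^ 2, by fun_prop⟩
  exact ⟨g, tendsto_expect_of_tendsto_expect_subseq (F := F) hB hS hφ.tendsto_atTop hg⟩

theorem IsWeaklyAlmostPeriodic.continuous_meanPseudodist (hf : IsWeaklyAlmostPeriodic T f)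
    (hB : IsFoelnerSeq B) (hT : ∀ i j, T (i + j) = (T i).comp (T j)) :
    Continuous fun p : X × X => meanPseudodist B T f p.1 p.2 := by
  obtain ⟨g, hg⟩ := hf.exists_tendsto_expect hB hT
  have heq (p : X × X) : meanPseudodist B T f p.1 p.2 = √(g p) :=
    ((Real.continuous_sqrt.tendsto _).comp (hg p)).limsup_eq
  simpa only [heq] using g.continuous.sqrt

end MeanEquicontinuity

theorem stmt14_general {G 𝕜 : Type*} [DecidableEq G] [AddCommSemigroup G] [IsRightCancelAdd G]
    [Nonempty G] [RCLike 𝕜] [MetricSpace X] [CompactSpace X] {B : ℕ → Finset G}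
    (hB : IsFoelnerSeq B) {T : G → C(X, X)} (hT : ∀ i j, T (i + j) = (T i).comp (T j))
    {f : C(X, 𝕜)} (hf : IsWeaklyAlmostPeriodic T f) :
    ∀ x : X, ∀ ε : ℝ, 0 < ε → ∃ δ : ℝ, 0 < δ ∧
      ∀ y : X, dist x y ≤ δ → meanPseudodist B T f x y ≤ ε := by
  intro x ε hε
  have hcont : Continuous (meanPseudodist B T f x) :=
    (hf.continuous_meanPseudodist hB hT).uncurry_left x
  have hx : meanPseudodist B T f x x < ε := (meanPseudodist_self B T f x).trans_lt hε
  have hsmall : ∀ᶠ y in 𝓝 x, meanPseudodist B T f x y < ε := hcont.tendsto x (Iio_mem_nhds hx)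
  obtain ⟨δ, hδ, hball⟩ := nhds_basis_closedBall.eventually_iff.1 hsmall
  exact ⟨δ, hδ, fun y hy => (hball (mem_closedBall'.2 hy)).le⟩

/-- in a uniquely ergodic TDS (given by a continuous `ℕ^d`-action on a
compact metric space), every weakly almost periodic `f ∈ C(X)` (orbit precompact in the
weak topology of the Banach space `C(X)`) is mean equicontinuous. -/
theorem stmt14 {d : ℕ}
    [MetricSpace X] [CompactSpace X] [MeasurableSpace X] [BorelSpace X]
    (T : (Fin d → ℕ) → X → X)
    (hTc : ∀ j, Continuous (T j))
    (hTadd : ∀ i j, T (i + j) = T i ∘ T j)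
    (hue : ∃! μ : Measure X, IsProbabilityMeasure μ ∧ ∀ j, MeasurePreserving (T j) μ μ)
    (f : X → ℂ) (hf : Continuous f)
    (hwap : IsCompact (closure (Set.range fun j : Fin d → ℕ =>
      toWeakSpace ℂ C(X, ℂ) (ContinuousMap.mk (f ∘ T j) (hf.comp (hTc j)))))) :
    ∀ x : X, ∀ ε : ℝ, 0 < ε → ∃ δ : ℝ, 0 < δ ∧
      ∀ y : X, dist x y ≤ δ → dFN T f x y ≤ ε := by
  have hwap' : IsWeaklyAlmostPeriodic (fun j => ⟨T j, hTc j⟩) (⟨f, hf⟩ : C(X, ℂ)) := hwap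
  simpa only [← dFN_eq_meanPseudodist, ContinuousMap.coe_mk] using stmt14_general
    (isFoelnerSeq_FboxN d) (fun i j => ContinuousMap.ext (congrFun (hTadd i j))) hwap'
end
end
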